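/- arXiv:1512.08345 — 3 statements merged into one kernel-verified Lean document; each statement's English description precedes it below -/
import Mathlib

section
/- Parameter specialization identity: for nonnegative integers k, ℓ and real parameters μ_1, μ_2, ∑_{|α|=k+ℓ+3} ∑_{a_1+a_2+a_3=k} (μ_1^{a_1}+μ_2^{a_1})(μ_1+μ_2)^{a_2}(μ_1^{a_3}+μ_2^{a_3}) · 2^{α_{a_1+1}+⋯+α_{a_1+a_2+1}-1-a_2} (1 - 2^{1-α_{a_1+a_2+1}}) · ζ(α_0, α_1, ..., α_{k+1}+1) = (ℓ+1)·ζ(k+ℓ+4)·∑_{a_1+a_2=k} μ_1^{a_1} μ_2^{a_2}. -/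
open Finset

/-- Multiple zeta value `ζ(α₀,…,α_{n-1}) = ∑_{0<ℓ₀<⋯<ℓ_{n-1}} ∏ ℓᵢ^{-αᵢ}`. -/
noncomputable def mzv {n : ℕ} (α : Fin n → ℕ) : ℝ :=
  ∑' ℓ : {ℓ : Fin n → ℕ // StrictMono ℓ ∧ ∀ i, 0 < ℓ i},
    ∏ i, ((ℓ.1 i : ℝ) ^ (α i))⁻¹

/-- Compositions of `m` into `n` positive parts. -/
def Comp (n m : ℕ) : Type := {v : Fin n → ℕ // (∀ i, 0 < v i) ∧ ∑ i, v i = m}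

/-- Increase the last entry of a tuple by one. -/
def incLast {n : ℕ} (v : Fin n → ℕ) : Fin n → ℕ :=
  fun i => if (i : ℕ) = n - 1 then v i + 1 else v i

/-- Extend a tuple on `Fin n` to `ℕ` by zero. -/
def ext {n : ℕ} (v : Fin n → ℕ) : ℕ → ℕ :=
  fun r => if h : r < n then v ⟨r, h⟩ else 0

open scoped ENNReal

namespace PS
open PowerSeries

/-- Euler operator. -/
noncomputable def th (f : PowerSeries ℝ) : PowerSeries ℝ := X * derivative ℝ f

/-- The geometric series without constant term. -/
noncomputable def TT : PowerSeries ℝ := PowerSeries.mk fun n => if n = 0 then 0 else 1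

/-- The operator dividing the n-th coefficient by `n - c`. -/
noncomputable def opB (c : ℝ) : PowerSeries ℝ →ₗ[ℝ] PowerSeries ℝ where
  toFun f := PowerSeries.mk fun n => coeff n f / ((n : ℝ) - c)
  map_add' f g := by ext n; simp [add_div]
  map_smul' r f := by ext n; simp [mul_div_assoc]

/-- Partial sums, then division by `n - c`. -/
noncomputable def opA (c : ℝ) : PowerSeries ℝ →ₗ[ℝ] PowerSeries ℝ :=
  (opB c).comp (LinearMap.mulLeft ℝ TT)

lemma opA_apply (c : ℝ) (f) : opA c f = opB c (TT * f) := rfl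

lemma coeff_opB (c : ℝ) (f) (n : ℕ) : coeff n (opB c f) = coeff n f / ((n : ℝ) - c) := by
  simp [opB]

lemma coeff_TT_mul (f : PowerSeries ℝ) (n : ℕ) :
    coeff n (TT * f) = ∑ m ∈ range n, coeff m f := by
  rw [mul_comm, coeff_mul, Finset.Nat.sum_antidiagonal_eq_sum_range_succ
    (fun i j => coeff i f * coeff j TT), Finset.sum_range_succ]
  simp only [TT, coeff_mk]
  simp only [Nat.sub_self, if_true, mul_zero, add_zero]
  refine Finset.sum_congr rfl fun m hm => ?_
  have : n - m ≠ 0 := by have := Finset.mem_range.1 hm; omega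
  simp [this]

lemma coeff_opA (c : ℝ) (f) (n : ℕ) :
    coeff n (opA c f) = (∑ m ∈ range n, coeff m f) / ((n : ℝ) - c) := by
  rw [opA_apply, coeff_opB, coeff_TT_mul]

lemma coeff_th (f : PowerSeries ℝ) (n : ℕ) : coeff n (th f) = n * coeff n f := by
  unfold th
  cases n with
  | zero => simp
  | succ n => rw [coeff_succ_X_mul, coeff_derivative]; push_cast; ring

lemma th_mul (f g : PowerSeries ℝ) : th (f * g) = th f * g + f * th g := by
  unfold th
  rw [Derivation.leibniz]; simp only [smul_eq_mul]; ring

lemma eq_opB {c : ℝ} (hc : ∀ n : ℕ, (n : ℝ) ≠ c) {g h : PowerSeries ℝ} :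
    g = opB c h ↔ th g = c • g + h := by
  constructor
  · rintro rfl
    ext n
    have := sub_ne_zero.2 (hc n)
    simp only [coeff_th, coeff_opB, map_add, coeff_smul, smul_eq_mul]
    field_simp; ring
  · intro H
    ext n
    have := sub_ne_zero.2 (hc n)
    have h2 := congrArg (coeff n) H
    simp only [coeff_th, map_add, coeff_smul, smul_eq_mul] at h2
    rw [coeff_opB, eq_div_iff this]; linarith

lemma th_opA {c : ℝ} (hc : ∀ n : ℕ, (n : ℝ) ≠ c) (f) :
    th (opA c f) = c • opA c f + TT * f := (eq_opB hc).1 rfl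

/-- words in one block -/
noncomputable def Phi (x : ℝ) (a : ℕ) : PowerSeries ℝ := ((opA x) ^ a) 1

noncomputable def pp (x : ℝ) (a : ℕ) : PowerSeries ℝ := opB 0 (Phi x a)

lemma Phi_zero (x : ℝ) : Phi x 0 = 1 := rfl
lemma Phi_succ (x : ℝ) (a : ℕ) : Phi x (a+1) = opA x (Phi x a) := by
  unfold Phi; rw [pow_succ']; rfl

lemma coeff_zero_opA (c : ℝ) (f) : coeff 0 (opA c f) = 0 := by
  rw [coeff_opA]; simp

lemma th_pp (x : ℝ) (a : ℕ) : th (pp x (a+1)) = Phi x (a+1) := by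
  ext n
  rw [coeff_th, pp, coeff_opB]
  rcases Nat.eq_zero_or_pos n with rfl | h
  · rw [Phi_succ, coeff_zero_opA]; simp
  · have : (n:ℝ) ≠ 0 := by positivity
    field_simp; simp [mul_comm]

noncomputable def OO (x : ℝ) (a : ℕ) : ℕ → PowerSeries ℝ
  | 0 => 0
  | b+1 => opA x (OO x a b) + opB x (Phi x a * Phi x (b+1))

noncomputable def DD (x : ℝ) (a b : ℕ) : PowerSeries ℝ := ((opA x) ^ b) (pp x a)

lemma DD_succ (x : ℝ) (a b : ℕ) : DD x a (b+1) = opA x (DD x a b) := by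
  unfold DD; rw [pow_succ']; rfl

lemma pp_mul_Phi {x : ℝ} (hx : ∀ n : ℕ, (n : ℝ) ≠ x) (a b : ℕ) :
    pp x (a+1) * Phi x b = DD x (a+1) b + OO x (a+1) b := by
  induction b with
  | zero => simp [DD, OO, Phi]
  | succ b ih =>
    rw [DD_succ, OO, ← add_assoc, ← map_add, ← ih, opA_apply, ← map_add, eq_opB hx, th_mul, th_pp,
      Phi_succ x b, th_opA hx]
    simp only [smul_eq_C_mul]
    ring

/-- Combined double product. -/
noncomputable def SS (x m1 m2 : ℝ) (k : ℕ) : PowerSeries ℝ :=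
  ∑ a ∈ antidiagonal k, (m1 ^ a.1 * m2 ^ a.2) • (Phi x (a.1+1) * Phi x (a.2+1))

noncomputable def VV (x m1 m2 : ℝ) (k : ℕ) : PowerSeries ℝ :=
  ∑ a ∈ antidiagonal k, (m1 ^ a.1 * m2 ^ a.2) • (OO x (a.1+1) (a.2+1))

lemma SS_symm (x m1 m2 : ℝ) (k : ℕ) : SS x m1 m2 k = SS x m2 m1 k := by
  unfold SS
  rw [← Finset.Nat.sum_antidiagonal_swap]
  refine Finset.sum_congr rfl fun a _ => ?_
  simp only [Prod.fst_swap, Prod.snd_swap]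
  rw [mul_comm (m1 ^ _), mul_comm (Phi x _)]

lemma Phi_mul {x : ℝ} (hx : ∀ n : ℕ, (n : ℝ) ≠ x) (hx2 : ∀ n : ℕ, (n : ℝ) ≠ 2 * x) (a b : ℕ) :
    Phi x (a+1) * Phi x (b+1) =
      opA (2*x) (Phi x a * Phi x (b+1)) + opA (2*x) (Phi x (a+1) * Phi x b) := by
  rw [← map_add, opA_apply, eq_opB hx2, th_mul, Phi_succ x a, th_opA hx, Phi_succ x b, th_opA hx]
  simp only [smul_eq_C_mul, map_mul]
  have : (C (2:ℝ) : PowerSeries ℝ) = 2 := by rw [map_ofNat]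
  rw [this]
  ring

lemma SS_rec {x : ℝ} (hx : ∀ n : ℕ, (n : ℝ) ≠ x) (hx2 : ∀ n : ℕ, (n : ℝ) ≠ 2 * x) (m1 m2 : ℝ)
    (k : ℕ) : SS x m1 m2 k =
      ∑ a ∈ antidiagonal k, ((m1 ^ a.1 + m2 ^ a.1) * (m1 + m2) ^ a.2) •
        ((opA (2*x)) ^ (a.2+1)) (Phi x (a.1+1)) := by
  induction k with
  | zero =>
    simp only [SS, Finset.Nat.antidiagonal_zero, sum_singleton, pow_zero, zero_add, pow_one]
    rw [Phi_mul hx hx2, Phi_zero]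
    simp only [one_mul, mul_one]
    rw [← two_smul ℝ]; norm_num
  | succ k ih =>
    rw [Finset.Nat.sum_antidiagonal_succ']
    have e : ∀ a : ℕ × ℕ, ((m1 ^ a.1 + m2 ^ a.1) * (m1 + m2) ^ (a.2+1)) •
        ((opA (2*x)) ^ (a.2+1+1)) (Phi x (a.1+1)) = (m1+m2) • opA (2*x) 
        (((m1 ^ a.1 + m2 ^ a.1) * (m1 + m2) ^ a.2) •
        ((opA (2*x)) ^ (a.2+1)) (Phi x (a.1+1))) := by
      intro a
      rw [pow_succ' (opA (2*x)), map_smul, smul_smul]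
      congr 1; ring
    simp only [e]
    rw [← Finset.smul_sum, ← map_sum, ← ih]
    have h1 : ∑ a ∈ antidiagonal (k+1), (m1 ^ a.1 * m2 ^ a.2) • (Phi x (a.1) * Phi x (a.2+1))
        = m1 • SS x m1 m2 k + (m2^(k+1)) • Phi x (k+1+1) := by
      rw [Finset.Nat.sum_antidiagonal_succ, SS, Finset.smul_sum, add_comm]
      congr 1
      · refine Finset.sum_congr rfl fun a _ => ?_
        rw [smul_smul]; congr 1; ring
      · simp [Phi_zero]
    have h2 : ∑ a ∈ antidiagonal (k+1), (m1 ^ a.1 * m2 ^ a.2) • (Phi x (a.1+1) * Phi x (a.2))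
        = m2 • SS x m1 m2 k + (m1^(k+1)) • Phi x (k+1+1) := by
      rw [Finset.Nat.sum_antidiagonal_succ', SS, Finset.smul_sum]
      rw [add_comm]
      congr 1
      · refine Finset.sum_congr rfl fun a _ => ?_
        rw [smul_smul]; congr 1; ring
      · simp [Phi_zero]
    have h3 : SS x m1 m2 (k+1) = opA (2*x) (m1 • SS x m1 m2 k + (m2^(k+1)) • Phi x (k+1+1)) +
        opA (2*x) (m2 • SS x m1 m2 k + (m1^(k+1)) • Phi x (k+1+1)) := by
      rw [← h1, ← h2, ← map_add, ← Finset.sum_add_distrib, SS, map_sum]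
      refine Finset.sum_congr rfl fun a _ => ?_
      rw [Phi_mul hx hx2, ← map_add, ← smul_add, map_smul]
    rw [h3]
    simp only [map_add, map_smul, zero_add, pow_zero, pow_one, mul_one]
    module

lemma VV_rec (x m1 m2 : ℝ) (k : ℕ) : VV x m1 m2 k =
      ∑ a ∈ antidiagonal k, (m2 ^ a.2) • ((opA x) ^ a.2) (opB x (SS x m1 m2 a.1)) := by
  induction k with
  | zero => simp [VV, SS, OO]
  | succ k ih =>
    rw [Finset.Nat.sum_antidiagonal_succ']
    have e : ∀ a : ℕ × ℕ, (m2 ^ (a.2+1)) • ((opA x) ^ (a.2+1)) (opB x (SS x m1 m2 a.1)) =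
        m2 • opA x ((m2 ^ a.2) • ((opA x) ^ a.2) (opB x (SS x m1 m2 a.1))) := by
      intro a
      rw [pow_succ' (opA x), map_smul, smul_smul]
      congr 1; ring
    simp only [e]
    rw [← Finset.smul_sum, ← map_sum, ← ih]
    have h1 : ∑ a ∈ antidiagonal (k+1), (m1 ^ a.1 * m2 ^ a.2) • OO x (a.1+1) a.2
        = m2 • VV x m1 m2 k := by
      rw [Finset.Nat.sum_antidiagonal_succ', VV, Finset.smul_sum]
      simp only [OO, smul_zero, zero_add]
      refine Finset.sum_congr rfl fun a _ => ?_
      rw [smul_smul]; congr 1; ring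
    rw [← map_smul (opA x) m2, ← h1, VV, SS, map_sum]
    simp only [pow_zero, one_smul, Module.End.one_apply, map_sum]
    rw [← Finset.sum_add_distrib]
    refine Finset.sum_congr rfl fun a _ => ?_
    rw [OO, smul_add, map_smul, map_smul, add_comm]

/-- the basic sequence -/
noncomputable def EE (x : ℝ) (a1 a2 a3 : ℕ) : PowerSeries ℝ :=
  ((opA x) ^ a3) (opB x (((opA (2*x)) ^ (a2+1)) (Phi x (a1+1))))

lemma VV_eq {x : ℝ} (hx : ∀ n : ℕ, (n : ℝ) ≠ x) (hx2 : ∀ n : ℕ, (n : ℝ) ≠ 2 * x) (m1 m2 : ℝ)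
    (k : ℕ) : VV x m1 m2 k = ∑ a ∈ antidiagonal k, ∑ a' ∈ antidiagonal a.2,
      ((m1 ^ a.1 + m2 ^ a.1) * (m1 + m2) ^ a'.1 * m2 ^ a'.2) • EE x a.1 a'.1 a'.2 := by
  rw [VV_rec]
  have e : ∀ a ∈ antidiagonal k, (m2 ^ a.2) • ((opA x) ^ a.2) (opB x (SS x m1 m2 a.1)) =
      ∑ a' ∈ antidiagonal a.1, ((m1 ^ a'.1 + m2 ^ a'.1) * (m1 + m2) ^ a'.2 * m2 ^ a.2) •
        EE x a'.1 a'.2 a.2 := by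
    intro a _
    rw [SS_rec hx hx2, map_sum, map_sum, Finset.smul_sum]
    refine Finset.sum_congr rfl fun a' _ => ?_
    rw [map_smul, map_smul, smul_smul, EE]
    congr 1; ring
  rw [Finset.sum_congr rfl e, Finset.sum_sigma', Finset.sum_sigma']
  refine Finset.sum_nbij' (fun p => ⟨(p.2.1, p.2.2 + p.1.2), (p.2.2, p.1.2)⟩)
    (fun p => ⟨(p.1.1 + p.2.1, p.2.2), (p.1.1, p.2.1)⟩) ?_ ?_ ?_ ?_ ?_
  · rintro ⟨⟨a, b⟩, ⟨c, d⟩⟩ h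
    simp only [mem_sigma, HasAntidiagonal.mem_antidiagonal] at h ⊢
    obtain ⟨h1, h2⟩ := h
    refine ⟨?_, ?_⟩ <;> first | omega | rfl | trivial
  · rintro ⟨⟨a, b⟩, ⟨c, d⟩⟩ h
    simp only [mem_sigma, HasAntidiagonal.mem_antidiagonal] at h ⊢
    obtain ⟨h1, h2⟩ := h
    refine ⟨?_, ?_⟩ <;> first | omega | rfl | trivial
  · rintro ⟨⟨a, b⟩, ⟨c, d⟩⟩ h
    simp only [mem_sigma, HasAntidiagonal.mem_antidiagonal] at h ⊢
    obtain ⟨h1, rfl⟩ := h; rfl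
  · rintro ⟨⟨a, b⟩, ⟨c, d⟩⟩ h
    simp only [mem_sigma, HasAntidiagonal.mem_antidiagonal] at h ⊢
    obtain ⟨h1, rfl⟩ := h; rfl
  · rintro ⟨⟨a, b⟩, ⟨c, d⟩⟩ h
    rfl

lemma VV_add {x : ℝ} (hx : ∀ n : ℕ, (n : ℝ) ≠ x) (hx2 : ∀ n : ℕ, (n : ℝ) ≠ 2 * x) (m1 m2 : ℝ)
    (k : ℕ) : VV x m1 m2 k + VV x m2 m1 k = ∑ a ∈ antidiagonal k, ∑ a' ∈ antidiagonal a.2,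
      ((m1 ^ a.1 + m2 ^ a.1) * (m1 + m2) ^ a'.1 * (m1 ^ a'.2 + m2 ^ a'.2)) •
        EE x a.1 a'.1 a'.2 := by
  rw [VV_eq hx hx2, VV_eq hx hx2, ← Finset.sum_add_distrib]
  refine Finset.sum_congr rfl fun a _ => ?_
  rw [← Finset.sum_add_distrib]
  refine Finset.sum_congr rfl fun a' _ => ?_
  rw [← add_smul]
  congr 1
  ring

lemma VV_add' (x : ℝ) (m1 m2 : ℝ) (k : ℕ) : VV x m1 m2 k + VV x m2 m1 k =
    ∑ a ∈ antidiagonal k, (m1 ^ a.1 * m2 ^ a.2) •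
      (OO x (a.1+1) (a.2+1) + OO x (a.2+1) (a.1+1)) := by
  simp only [smul_add, Finset.sum_add_distrib]
  congr 1
  unfold VV
  rw [← Finset.Nat.sum_antidiagonal_swap]
  refine Finset.sum_congr rfl fun a _ => ?_
  simp only [Prod.fst_swap, Prod.snd_swap]
  rw [mul_comm (m1 ^ _)]

lemma opA_nonneg {c : ℝ} (hc : c < 1) {f : PowerSeries ℝ} (hf : ∀ n, 0 ≤ coeff n f) (n : ℕ) :
    0 ≤ coeff n (opA c f) := by
  rw [coeff_opA]
  rcases Nat.eq_zero_or_pos n with rfl | h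
  · simp
  · have : (1:ℝ) ≤ n := by exact_mod_cast h
    exact div_nonneg (Finset.sum_nonneg fun i _ => hf i) (by linarith)

lemma opB_nonneg {c : ℝ} (hc : c < 1) {f : PowerSeries ℝ} (hf : ∀ n, 0 ≤ coeff n f)
    (h0 : coeff 0 f = 0) (n : ℕ) : 0 ≤ coeff n (opB c f) := by
  rw [coeff_opB]
  rcases Nat.eq_zero_or_pos n with rfl | h
  · simp [h0]
  · have : (1:ℝ) ≤ n := by exact_mod_cast h
    exact div_nonneg (hf n) (by linarith)

lemma opB0_nonneg {f : PowerSeries ℝ} (hf : ∀ n, 0 ≤ coeff n f) (n : ℕ) :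
    0 ≤ coeff n (opB 0 f) := by
  rw [coeff_opB]
  exact div_nonneg (hf n) (by simp)

lemma opA_pow_nonneg {c : ℝ} (hc : c < 1) {f : PowerSeries ℝ} (hf : ∀ n, 0 ≤ coeff n f) (k n : ℕ) :
    0 ≤ coeff n (((opA c) ^ k) f) := by
  induction k generalizing n with
  | zero => exact hf n
  | succ k ih => rw [pow_succ']; exact opA_nonneg hc ih n

lemma coeff_zero_opA_pow (c : ℝ) (f) (hf : coeff 0 f = 0) (k : ℕ) :
    coeff 0 (((opA c) ^ k) f) = 0 := by
  cases k with
  | zero => exact hf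
  | succ k => rw [pow_succ']; exact coeff_zero_opA _ _

lemma Phi_nonneg {x : ℝ} (hx : x < 1) (a n : ℕ) : 0 ≤ coeff n (Phi x a) :=
  opA_pow_nonneg hx (fun n => by rw [coeff_one]; split_ifs <;> simp) a n

lemma mul_nonneg' {f g : PowerSeries ℝ} (hf : ∀ n, 0 ≤ coeff n f) (hg : ∀ n, 0 ≤ coeff n g)
    (n : ℕ) : 0 ≤ coeff n (f * g) := by
  rw [coeff_mul]
  exact Finset.sum_nonneg fun i _ => mul_nonneg (hf _) (hg _)

lemma pp_nonneg {x : ℝ} (hx : x < 1) (a n : ℕ) : 0 ≤ coeff n (pp x a) :=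
  opB0_nonneg (Phi_nonneg hx a) n

lemma DD_nonneg {x : ℝ} (hx : x < 1) (a b n : ℕ) : 0 ≤ coeff n (DD x a b) :=
  opA_pow_nonneg hx (pp_nonneg hx a) b n

lemma OO_nonneg {x : ℝ} (hx : x < 1) (a b n : ℕ) : 0 ≤ coeff n (OO x a b) := by
  induction b generalizing n with
  | zero => simp [OO]
  | succ b ih =>
    rw [OO, map_add]
    refine add_nonneg (opA_nonneg hx ih n) (opB_nonneg hx
      (mul_nonneg' (Phi_nonneg hx _) (Phi_nonneg hx _)) ?_ n)
    rw [coeff_mul]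
    simp [Phi_succ x b, coeff_opA]

lemma EE_nonneg {x : ℝ} (hx : x < 1) (hx2 : 2 * x < 1) (a1 a2 a3 n : ℕ) :
    0 ≤ coeff n (EE x a1 a2 a3) := by
  unfold EE
  refine opA_pow_nonneg hx (opB_nonneg hx (opA_pow_nonneg hx2 (Phi_nonneg hx _) _) ?_) _ _
  apply coeff_zero_opA_pow
  rw [Phi_succ, coeff_zero_opA]

lemma pp_mul_pp {x : ℝ} (hx : ∀ n : ℕ, (n : ℝ) ≠ x) (a b n : ℕ) :
    coeff n (pp x (a+1) * pp x (b+1)) = coeff n (opB 0 (DD x (a+1) (b+1))) +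
      coeff n (opB 0 (DD x (b+1) (a+1))) +
      coeff n (opB 0 (OO x (a+1) (b+1) + OO x (b+1) (a+1))) := by
  have h := congrArg (coeff n) (th_mul (pp x (a+1)) (pp x (b+1)))
  rw [th_pp, th_pp, mul_comm (Phi x _), pp_mul_Phi hx, pp_mul_Phi hx, coeff_th] at h
  simp only [coeff_opB, sub_zero]
  rcases Nat.eq_zero_or_pos n with rfl | hn
  · simp [coeff_mul, pp, coeff_opB]
  · have : (n:ℝ) ≠ 0 := by positivity
    field_simp
    rw [mul_comm, h]; simp only [map_add]; ring

end PS

namespace PS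

lemma tsum_shift (F : ℕ → ℝ≥0∞) (m : ℕ) :
    ∑' M, (if m < M then F M else 0) = ∑' j, F (m + 1 + j) := by
  have hinj : Function.Injective (fun j => m + 1 + j) := fun a b h => by
    simp only at h; omega
  rw [← hinj.tsum_eq (f := fun M => if m < M then F M else 0)]
  · refine tsum_congr fun j => ?_
    rw [if_pos (by omega)]
  · intro M hM
    simp only [Function.mem_support] at hM
    refine ⟨M - (m+1), ?_⟩
    have : m < M := by by_contra h; simp [h] at hM
    simp only; omega

lemma range_eq_tsum (F : ℕ → ℝ≥0∞) (M : ℕ) :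
    ∑ m ∈ range M, F m = ∑' m, (if m < M then F m else 0) := by
  rw [tsum_eq_sum (s := range M)]
  · exact Finset.sum_congr rfl fun m hm => by rw [if_pos (Finset.mem_range.1 hm)]
  · intro m hm; rw [if_neg (by simpa using hm)]

lemma tsum_swap (F : ℕ → ℕ → ℝ≥0∞) :
    ∑' M, ∑ m ∈ range M, F m M = ∑' m, ∑' j, F m (m + 1 + j) := by
  simp only [range_eq_tsum]
  rw [ENNReal.tsum_comm]
  exact tsum_congr fun m => tsum_shift (F m) m

lemma tsum_split (v : ℕ → ℝ≥0∞) (i : ℕ) :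
    ∑' j, v j = ∑ j ∈ range i, v j + v i + ∑' j, v (i + 1 + j) := by
  have := Summable.sum_add_tsum_nat_add' (k := i+1) (f := v) ENNReal.summable
  rw [← this, Finset.sum_range_succ]
  congr 2; ext j; rw [add_comm]

lemma stuffle (u v : ℕ → ℝ≥0∞) :
    (∑' i, u i) * (∑' j, v j) = ∑' i, u i * ∑' j, v (i+1+j) + ∑' i, v i * ∑' j, u (i+1+j)
      + ∑' i, u i * v i := by
  rw [← ENNReal.tsum_mul_right]
  have e : ∀ i, u i * ∑' j, v j = ∑ j ∈ range i, u i * v j + u i * v i + u i * ∑' j, v (i+1+j) := by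
    intro i
    rw [tsum_split v i, mul_add, mul_add, Finset.mul_sum]
  simp only [e]
  rw [ENNReal.tsum_add, ENNReal.tsum_add, tsum_swap (fun m M => u M * v m)]
  have : ∀ m, ∑' j, u (m+1+j) * v m = v m * ∑' j, u (m+1+j) := by
    intro m; rw [ENNReal.tsum_mul_right, mul_comm]
  simp only [this]
  ring

lemma cauchy (u v : ℕ → ℝ≥0∞) :
    (∑' i, u i) * (∑' j, v j) = ∑' n, ∑ p ∈ antidiagonal n, u p.1 * v p.2 := by
  have h : ∀ n, ∑ p ∈ antidiagonal n, u p.1 * v p.2 =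
      ∑' p : antidiagonal n, u p.1.1 * v p.1.2 := by
    intro n
    rw [tsum_fintype, Finset.sum_coe_sort (antidiagonal n) (fun p => u p.1 * v p.2)]
  simp only [h]
  rw [← ENNReal.tsum_sigma' (fun p : (Σ n : ℕ, HasAntidiagonal.antidiagonal n) => u p.2.1.1 * v p.2.1.2)]
  rw [← (HasAntidiagonal.sigmaAntidiagonalEquivProd (A := ℕ)).symm.tsum_eq]
  simp only [HasAntidiagonal.sigmaAntidiagonalEquivProd_symm_apply_snd_coe]
  rw [ENNReal.tsum_prod (f := fun i j => u i * v j), ← ENNReal.tsum_mul_right]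
  exact tsum_congr fun i => by rw [ENNReal.tsum_mul_left]

lemma hasSum_of_ofReal {f g : ℕ → ℝ} (hf : ∀ n, 0 ≤ f n) (hg : ∀ n, 0 ≤ g n) (hs : Summable g)
    (h : ∑' n, ENNReal.ofReal (f n) = ∑' n, ENNReal.ofReal (g n)) : HasSum f (∑' n, g n) := by
  have hfin : ∑' n, ENNReal.ofReal (f n) ≠ ∞ := by
    rw [h, ← ENNReal.ofReal_tsum_of_nonneg hg hs]; exact ENNReal.ofReal_ne_top
  have hsf : Summable f := by
    have := ENNReal.summable_toReal hfin
    simpa [ENNReal.toReal_ofReal, hf] using this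
  rw [← ENNReal.ofReal_tsum_of_nonneg hg hs, ← ENNReal.ofReal_tsum_of_nonneg hf hsf] at h
  rw [ENNReal.ofReal_eq_ofReal_iff (tsum_nonneg hf) (tsum_nonneg hg)] at h
  rw [← h]; exact hsf.hasSum

/-- shifted factorial -/
noncomputable def poch (x : ℝ) (n : ℕ) : ℝ := ∏ i ∈ range n, ((i:ℝ) + 1 - x)

lemma poch_pos {x : ℝ} (hx : x < 1) (n : ℕ) : 0 < poch x n :=
  Finset.prod_pos fun i _ => by
    have : (0:ℝ) ≤ i := by positivity
    linarith

lemma poch_succ (x : ℝ) (n : ℕ) : poch x (n+1) = poch x n * ((n:ℝ) + 1 - x) := by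
  rw [poch, Finset.prod_range_succ]; rfl

/-- connector -/
noncomputable def CC (x : ℝ) (n m : ℕ) : ℝ := poch x n * poch x m / poch x (n + m)

lemma CC_symm (x : ℝ) (n m : ℕ) : CC x n m = CC x m n := by
  unfold CC; rw [add_comm, mul_comm (poch x n)]

lemma CC_nonneg {x : ℝ} (hx : x < 1) (n m : ℕ) : 0 ≤ CC x n m := by
  unfold CC
  have := poch_pos hx n; have := poch_pos hx m; have := poch_pos hx (n+m)
  positivity

lemma CC_zero_left {x : ℝ} (hx : x < 1) (m : ℕ) : CC x 0 m = 1 := by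
  have := poch_pos hx m
  unfold CC
  rw [zero_add, show poch x 0 = 1 by simp [poch], one_mul, div_self this.ne']

lemma CC_zero_right {x : ℝ} (hx : x < 1) (m : ℕ) : CC x m 0 = 1 := by
  rw [CC_symm, CC_zero_left hx]

lemma CC_diff {x : ℝ} (hx : x < 1) (n m : ℕ) (hn : 0 < n) :
    CC x n (m+1) / (((m+1:ℕ):ℝ) - x) = (CC x n m - CC x n (m+1)) / n := by
  unfold CC
  rw [← add_assoc, poch_succ, poch_succ]
  have := poch_pos hx n; have := poch_pos hx m; have := poch_pos hx (n+m)
  have hn' : (0:ℝ) < n := by exact_mod_cast hn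
  have hm' : (0:ℝ) ≤ m := by positivity
  have h1 : (0:ℝ) < m + 1 - x := by linarith
  have h2 : (0:ℝ) < n + m + 1 - x := by linarith
  push_cast
  field_simp
  ring

lemma CC_succ {x : ℝ} (hx : x < 1) (n m : ℕ) :
    CC x (n+1) m = CC x n m * (((n:ℝ)+1-x) / ((n:ℝ)+m+1-x)) := by
  unfold CC
  rw [add_right_comm, poch_succ, poch_succ]
  have := poch_pos hx (n+m)
  have hn' : (0:ℝ) ≤ n := by positivity
  have hm' : (0:ℝ) ≤ m := by positivity
  have h2 : (0:ℝ) < n + m + 1 - x := by linarith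
  push_cast
  field_simp

lemma CC_le_one {x : ℝ} (hx : x < 1) (n m : ℕ) : CC x n m ≤ 1 := by
  induction n with
  | zero => rw [CC_zero_left hx]
  | succ n ih =>
    rw [CC_succ hx]
    have hn' : (0:ℝ) ≤ n := by positivity
    have hm' : (0:ℝ) ≤ m := by positivity
    have h2 : (0:ℝ) < n + m + 1 - x := by linarith
    refine mul_le_one₀ ih (div_nonneg (by linarith) h2.le) ?_
    rw [div_le_one h2]; linarith

lemma CC_tendsto {x : ℝ} (hx : x < 1) (n : ℕ) (hn : 0 < n) :
    Filter.Tendsto (fun m => CC x n m) Filter.atTop (nhds 0) := by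
  obtain ⟨n, rfl⟩ : ∃ k, n = k + 1 := ⟨n-1, by omega⟩
  have h1 : Filter.Tendsto (fun m : ℕ => ((n:ℝ)+1-x) / ((n:ℝ)+m+1-x)) Filter.atTop (nhds 0) := by
    apply Filter.Tendsto.const_div_atTop
    have : Filter.Tendsto (fun m : ℕ => (m:ℝ) + ((n:ℝ)+1-x)) Filter.atTop Filter.atTop :=
      Filter.tendsto_atTop_add_const_right _ _ tendsto_natCast_atTop_atTop
    refine this.congr fun m => by ring
  refine squeeze_zero (fun m => CC_nonneg hx _ _) (fun m => ?_) h1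
  rw [CC_succ hx]
  have hn' : (0:ℝ) ≤ n := by positivity
  have hm' : (0:ℝ) ≤ m := by positivity
  have h2 : (0:ℝ) < n + m + 1 - x := by linarith
  exact mul_le_of_le_one_left (div_nonneg (by linarith) h2.le) (CC_le_one hx _ _)

lemma CC_hasSum {x : ℝ} (hx : x < 1) (n m : ℕ) (hn : 0 < n) :
    HasSum (fun j : ℕ => CC x n (m+1+j) / (((m+1+j:ℕ):ℝ) - x)) (CC x n m / n) := by
  rw [hasSum_iff_tendsto_nat_of_nonneg]
  · have h : ∀ N, ∑ j ∈ range N, CC x n (m+1+j) / (((m+1+j:ℕ):ℝ) - x) =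
        (CC x n m - CC x n (N + m)) / n := by
      intro N
      induction N with
      | zero => simp
      | succ N ih =>
        rw [Finset.sum_range_succ, ih, show m + 1 + N = (N+m)+1 by ring, CC_diff hx _ _ hn,
          show N + 1 + m = N + m + 1 by ring]
        ring
    simp only [h]
    have := ((Filter.tendsto_add_atTop_iff_nat m).2 (CC_tendsto hx n hn))
    have := (this.const_sub (CC x n m)).div_const (n:ℝ)
    simpa using this
  · intro j
    have : (0:ℝ) ≤ m := by positivity
    have : (0:ℝ) ≤ j := by positivity
    exact div_nonneg (CC_nonneg hx _ _) (by push_cast; linarith)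

lemma CC_tsum {x : ℝ} (hx : x < 1) (n m : ℕ) (hn : 0 < n) :
    ∑' j : ℕ, ENNReal.ofReal (CC x n (m+1+j) / (((m+1+j:ℕ):ℝ) - x)) =
      ENNReal.ofReal (CC x n m / n) := by
  have h := CC_hasSum hx n m hn
  rw [← h.tsum_eq, ENNReal.ofReal_tsum_of_nonneg _ h.summable]
  intro j
  have : (0:ℝ) ≤ m := by positivity
  have : (0:ℝ) ≤ j := by positivity
  exact div_nonneg (CC_nonneg hx _ _) (by push_cast; linarith)

end PS

namespace PS
open PowerSeries

/-- connected sum -/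
noncomputable def KK (x : ℝ) (f : PowerSeries ℝ) (n : ℕ) : ℝ≥0∞ :=
  ∑' M, ENNReal.ofReal (CC x n M * coeff M f)

lemma KK_zero {x : ℝ} (hx : x < 1) (f : PowerSeries ℝ) :
    KK x f 0 = ∑' M, ENNReal.ofReal (coeff M f) := by
  unfold KK; simp only [CC_zero_left hx, one_mul]

lemma KK_one {x : ℝ} (hx : x < 1) (n : ℕ) : KK x 1 n = 1 := by
  unfold KK
  rw [tsum_eq_single 0]
  · simp [CC_zero_right hx]
  · intro m hm; simp [coeff_one, hm]

lemma KK_opA {x : ℝ} (hx : x < 1) {f : PowerSeries ℝ} (hf : ∀ n, 0 ≤ coeff n f) {n : ℕ}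
    (hn : 0 < n) : KK x (opA x f) n = ENNReal.ofReal (1 / n) * KK x f n := by
  unfold KK
  have e : ∀ M, ENNReal.ofReal (CC x n M * coeff M (opA x f)) = ∑ m ∈ range M,
      ENNReal.ofReal (coeff m f) * ENNReal.ofReal (CC x n M / ((M:ℝ) - x)) := by
    intro M
    rcases Nat.eq_zero_or_pos M with rfl | h
    · simp [coeff_opA]
    have h1 : (1:ℝ) ≤ M := by exact_mod_cast h
    rw [← Finset.sum_mul, ← ENNReal.ofReal_sum_of_nonneg (fun i _ => hf i),
      ← ENNReal.ofReal_mul (Finset.sum_nonneg fun i _ => hf i), coeff_opA]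
    congr 1; ring
  simp only [e]
  rw [tsum_swap (fun m M => ENNReal.ofReal (coeff m f) * ENNReal.ofReal (CC x n M / ((M:ℝ) - x))),
    ← ENNReal.tsum_mul_left]
  refine tsum_congr fun m => ?_
  rw [ENNReal.tsum_mul_left, CC_tsum hx n m hn, ← ENNReal.ofReal_mul (hf m),
    ← ENNReal.ofReal_mul (by positivity)]
  congr 1; ring

lemma KK_sum {x : ℝ} (hx : x < 1) {f : PowerSeries ℝ}
    (h0 : coeff 0 f = 0) (n : ℕ) :
    KK x (opB 0 f) n =
      ∑' j : ℕ, ENNReal.ofReal (1 / (((n+1+j : ℕ):ℝ) - x)) * KK x f (n+1+j) := by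
  unfold KK
  simp only [← ENNReal.tsum_mul_left]
  rw [ENNReal.tsum_comm]
  refine tsum_congr fun M => ?_
  rcases Nat.eq_zero_or_pos M with rfl | h
  · simp [coeff_opB, h0]
  have e : ∀ j : ℕ, ENNReal.ofReal (1 / (((n+1+j : ℕ):ℝ) - x)) *
      ENNReal.ofReal (CC x (n+1+j) M * coeff M f) =
      ENNReal.ofReal (CC x M (n+1+j) / (((n+1+j : ℕ):ℝ) - x)) * ENNReal.ofReal (coeff M f) := by
    intro j
    have : (0:ℝ) ≤ n := by positivity
    have : (0:ℝ) ≤ j := by positivity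
    have : 0 < (((n+1+j : ℕ):ℝ) - x) := by push_cast; linarith
    rw [← ENNReal.ofReal_mul (by positivity), ← ENNReal.ofReal_mul
      (div_nonneg (CC_nonneg hx _ _) this.le), CC_symm]
    congr 1; ring
  simp only [e]
  rw [ENNReal.tsum_mul_right, CC_tsum hx M n h, ← ENNReal.ofReal_mul
      (div_nonneg (CC_nonneg hx _ _) (by positivity)), coeff_opB, CC_symm]
  congr 1; simp; ring

/-- summand of the depth one sum -/
noncomputable def zz (x : ℝ) (a : ℕ) (j : ℕ) : ℝ≥0∞ :=
  ENNReal.ofReal (1 / (((j+1 : ℕ):ℝ) - x)) * ENNReal.ofReal (1 / ((j+1 : ℕ):ℝ)) ^ a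

lemma KK_opA_pow {x : ℝ} (hx : x < 1) {f : PowerSeries ℝ} (hf : ∀ n, 0 ≤ coeff n f) {n : ℕ}
    (hn : 0 < n) (a : ℕ) :
    KK x ((opA x ^ a) f) n = ENNReal.ofReal (1 / n) ^ a * KK x f n := by
  induction a with
  | zero => simp
  | succ a ih =>
    rw [pow_succ' (opA x), Module.End.mul_apply, KK_opA hx (opA_pow_nonneg hx hf a) hn, ih]
    ring

lemma KK_pp {x : ℝ} (hx : x < 1) (a n : ℕ) :
    KK x (pp x (a+1)) n = ∑' j, zz x (a+1) (n+j) := by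
  rw [pp, KK_sum hx (by rw [Phi_succ, coeff_zero_opA])]
  refine tsum_congr fun j => ?_
  rw [Phi, ← Phi_zero x, KK_opA_pow hx (Phi_nonneg hx 0) (by omega), Phi_zero, KK_one hx, zz, mul_one]
  rw [add_right_comm]

lemma pp_tsum {x : ℝ} (hx : x < 1) (a : ℕ) :
    ∑' N, ENNReal.ofReal (coeff N (pp x (a+1))) = ∑' j, zz x (a+1) j := by
  rw [← KK_zero hx, KK_pp hx]; simp

lemma DD_tsum {x : ℝ} (hx : x < 1) (a b : ℕ) :
    ∑' N, ENNReal.ofReal (coeff N (opB 0 (DD x (a+1) (b+1)))) =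
      ∑' i, zz x (b+1) i * ∑' j, zz x (a+1) (i+1+j) := by
  rw [← KK_zero hx, KK_sum hx (by rw [DD_succ, coeff_zero_opA])]
  refine tsum_congr fun i => ?_
  rw [DD, KK_opA_pow hx (pp_nonneg hx _) (by omega), KK_pp hx, zz, ← mul_assoc]
  simp only [zero_add, add_comm 1 i]

lemma zz_eq {x : ℝ} (hx : x < 1) (a j : ℕ) :
    zz x a j = ENNReal.ofReal (1 / (((j+1 : ℕ):ℝ) - x) * (1 / ((j+1 : ℕ):ℝ)) ^ a) := by
  have : (0:ℝ) ≤ j := by positivity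
  have : 0 < (((j+1 : ℕ):ℝ) - x) := by push_cast; linarith
  rw [zz, ENNReal.ofReal_mul (by positivity), ENNReal.ofReal_pow (by positivity)]

/-- bound -/
lemma inv_sub_le {x : ℝ} (hx2 : x < 1/2) (j : ℕ) :
    1 / (((j+1 : ℕ):ℝ) - x) ≤ 2 * (1 / ((j+1 : ℕ):ℝ)) := by
  have : (0:ℝ) ≤ j := by positivity
  push_cast
  rw [mul_one_div, div_le_div_iff₀ (by linarith) (by linarith)]
  linarith

lemma summable_sq : Summable (fun j : ℕ => (1 / ((j+1 : ℕ):ℝ)) ^ 2) := by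
  have := (summable_nat_add_iff 1).2 (Real.summable_one_div_nat_pow.2 (one_lt_two))
  simpa using this

lemma zz_summable {x : ℝ} (hx2 : x < 1/2) (a : ℕ) :
    Summable (fun j : ℕ => 1 / (((j+1 : ℕ):ℝ) - x) * (1 / ((j+1 : ℕ):ℝ)) ^ (a+1)) := by
  refine Summable.of_nonneg_of_le (fun j => ?_) (fun j => ?_) (summable_sq.mul_left 2)
  · have : (0:ℝ) ≤ j := by positivity
    have : 0 < (((j+1 : ℕ):ℝ) - x) := by push_cast; linarith
    positivity
  · have h1 : (1 / ((j+1 : ℕ):ℝ)) ^ (a+1) ≤ (1 / ((j+1 : ℕ):ℝ)) := by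
      refine pow_le_of_le_one (by positivity) ?_ (by omega)
      rw [div_le_one (by positivity)]; push_cast; linarith [(Nat.cast_nonneg j : (0:ℝ) ≤ j)]
    calc _ ≤ 2 * (1 / ((j+1 : ℕ):ℝ)) * (1 / ((j+1 : ℕ):ℝ)) := by
          refine mul_le_mul (inv_sub_le hx2 j) h1 (by positivity) (by positivity)
      _ = _ := by ring

/-- summand of the right-hand side -/
noncomputable def rho (x : ℝ) (m : ℕ) (j : ℕ) : ℝ :=
  (1 / (((j+1 : ℕ):ℝ) - x)) ^ 2 * (1 / ((j+1 : ℕ):ℝ)) ^ m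

lemma rho_nonneg {x : ℝ} (m j : ℕ) : 0 ≤ rho x m j := by
  unfold rho; positivity

lemma rho_summable {x : ℝ} (hx2 : x < 1/2) (m : ℕ) : Summable (rho x m) := by
  refine Summable.of_nonneg_of_le (rho_nonneg m) (fun j => ?_) (summable_sq.mul_left 4)
  have h0 : (0:ℝ) ≤ j := by positivity
  have h3 : 0 < (((j+1 : ℕ):ℝ) - x) := by push_cast; linarith
  have h1 : (1 / ((j+1 : ℕ):ℝ)) ^ m ≤ 1 := by
    refine pow_le_one₀ (by positivity) ?_
    rw [div_le_one (by positivity)]; push_cast; linarith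
  have h2 := pow_le_pow_left₀ (by positivity) (inv_sub_le hx2 j) 2
  calc rho x m j ≤ (1 / (((j+1 : ℕ):ℝ) - x)) ^ 2 * 1 := by
        unfold rho; gcongr
    _ ≤ _ := by rw [mul_one]; refine h2.trans (le_of_eq (by ring))

lemma OO_hasSum {x : ℝ} (hx0 : 0 < x) (hx2 : x < 1/2) (a b : ℕ) :
    HasSum (fun N => coeff N (opB 0 (OO x (a+1) (b+1) + OO x (b+1) (a+1))))
      (∑' j, rho x (a+b+2) j) := by
  have hx : x < 1 := by linarith
  have hne : ∀ n : ℕ, (n:ℝ) ≠ x := by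
    intro n h
    rcases Nat.eq_zero_or_pos n with rfl | hn
    · simp at h; linarith
    · have : (1:ℝ) ≤ n := by exact_mod_cast hn
      linarith
  have hO : ∀ n, 0 ≤ coeff n (opB 0 (OO x (a+1) (b+1) + OO x (b+1) (a+1))) := by
    apply opB0_nonneg
    intro n; rw [map_add]; exact add_nonneg (OO_nonneg hx _ _ _) (OO_nonneg hx _ _ _)
  refine hasSum_of_ofReal hO (rho_nonneg _) (rho_summable hx2 _) ?_
  have h1 := cauchy (fun N => ENNReal.ofReal (coeff N (pp x (a+1))))
    (fun N => ENNReal.ofReal (coeff N (pp x (b+1))))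
  have e : ∀ n, ∑ p ∈ antidiagonal n, ENNReal.ofReal (coeff p.1 (pp x (a+1))) *
      ENNReal.ofReal (coeff p.2 (pp x (b+1))) =
      ENNReal.ofReal (coeff n (opB 0 (DD x (a+1) (b+1)))) +
      ENNReal.ofReal (coeff n (opB 0 (DD x (b+1) (a+1)))) +
      ENNReal.ofReal (coeff n (opB 0 (OO x (a+1) (b+1) + OO x (b+1) (a+1)))) := by
    intro n
    have hD := fun a b => opB0_nonneg (DD_nonneg hx a b) n
    rw [← ENNReal.ofReal_add (hD _ _) (hD _ _),
      ← ENNReal.ofReal_add (add_nonneg (hD _ _) (hD _ _)) (hO n), ← pp_mul_pp hne, coeff_mul,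
      ENNReal.ofReal_sum_of_nonneg
        (fun i _ => mul_nonneg (pp_nonneg hx _ _) (pp_nonneg hx _ _))]
    exact Finset.sum_congr rfl fun p _ => (ENNReal.ofReal_mul (pp_nonneg hx _ _)).symm
  simp only [e] at h1
  rw [ENNReal.tsum_add, ENNReal.tsum_add, DD_tsum hx, DD_tsum hx, pp_tsum hx, pp_tsum hx] at h1
  have h2 := stuffle (zz x (a+1)) (zz x (b+1))
  have hfin : ∀ a, ∑' j, zz x (a+1) j ≠ ∞ := by
    intro a
    simp only [zz_eq hx]
    rw [← ENNReal.ofReal_tsum_of_nonneg _ (zz_summable hx2 a)]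
    · exact ENNReal.ofReal_ne_top
    · intro j
      have : (0:ℝ) ≤ j := by positivity
      have : 0 < (((j+1 : ℕ):ℝ) - x) := by push_cast; linarith
      positivity
  have hfin2 := ENNReal.mul_ne_top (hfin a) (hfin b)
  rw [h2] at h1
  have hf3 : ∑' i, zz x (a+1) i * ∑' j, zz x (b+1) (i+1+j) +
    ∑' i, zz x (b+1) i * ∑' j, zz x (a+1) (i+1+j) ≠ ∞ := by
    rw [h2] at hfin2
    exact (ENNReal.add_ne_top.1 hfin2).1
  rw [add_comm (∑' i, zz x (b+1) i * _)] at h1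
  rw [← (ENNReal.add_right_inj hf3).1 h1]
  refine tsum_congr fun j => ?_
  have : (0:ℝ) ≤ j := by positivity
  have : 0 < (((j+1 : ℕ):ℝ) - x) := by push_cast; linarith
  rw [zz_eq hx, zz_eq hx, ← ENNReal.ofReal_mul (by positivity), rho]
  congr 1; ring

lemma ne_of_lt {x : ℝ} (hx0 : 0 < x) (hx : x < 1) : ∀ n : ℕ, (n:ℝ) ≠ x := by
  intro n h
  rcases Nat.eq_zero_or_pos n with rfl | hn
  · simp at h; linarith
  · have : (1:ℝ) ≤ n := by exact_mod_cast hn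
    linarith

lemma total_hasSum {x : ℝ} (hx0 : 0 < x) (hx2 : x < 1/2) (m1 m2 : ℝ) (k : ℕ) :
    HasSum (fun N => coeff N (opB 0 (∑ a ∈ antidiagonal k, ∑ a' ∈ antidiagonal a.2,
      ((m1 ^ a.1 + m2 ^ a.1) * (m1 + m2) ^ a'.1 * (m1 ^ a'.2 + m2 ^ a'.2)) •
        EE x a.1 a'.1 a'.2)))
      ((∑' j, rho x (k+2) j) * ∑ a ∈ antidiagonal k, m1 ^ a.1 * m2 ^ a.2) := by
  have hx : x < 1 := by linarith
  rw [← VV_add (ne_of_lt hx0 hx) (ne_of_lt (by linarith) (by linarith)), VV_add']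
  rw [map_sum, Finset.mul_sum]
  simp only [map_sum]
  refine hasSum_sum fun a ha => ?_
  have ha' : a.1 + a.2 = k := by simpa using ha
  simp only [map_smul, smul_eq_mul]
  rw [mul_comm (∑' j, _), ← ha']
  exact (OO_hasSum hx0 hx2 a.1 a.2).mul_left _

lemma EE_summable {x : ℝ} (hx0 : 0 < x) (hx2 : x < 1/2) (k : ℕ) (a a' : ℕ × ℕ)
    (ha : a ∈ antidiagonal k) (ha' : a' ∈ antidiagonal a.2) :
    Summable (fun N => coeff N (opB 0 (EE x a.1 a'.1 a'.2))) := by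
  have hx : x < 1 := by linarith
  have hE := fun a b c => opB0_nonneg (EE_nonneg hx (by linarith) a b c)
  refine Summable.of_nonneg_of_le (hE _ _ _) (fun N => ?_)
    (total_hasSum hx0 hx2 1 1 k).summable
  simp only [map_sum, map_smul, smul_eq_mul, one_pow]
  have hp : ∀ n : ℕ, (0:ℝ) ≤ (1+1) * (1+1)^n * (1+1) := fun n => by positivity
  refine le_trans ?_ (Finset.single_le_sum (f := fun b : ℕ × ℕ => ∑ a' ∈ antidiagonal b.2,
    (1+1) * (1+1)^a'.1 * (1+1) * coeff N (opB 0 (EE x b.1 a'.1 a'.2)))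
    (fun b _ => Finset.sum_nonneg fun b' _ => mul_nonneg (hp _) (hE _ _ _ N)) ha)
  refine le_trans ?_ (Finset.single_le_sum (f := fun a' : ℕ × ℕ => 
    (1+1) * (1+1)^a'.1 * (1+1) * coeff N (opB 0 (EE x a.1 a'.1 a'.2)))
    (fun b' _ => mul_nonneg (hp _) (hE _ _ _ N)) ha')
  refine le_mul_of_one_le_left (hE _ _ _ N) ?_
  have : (1:ℝ) ≤ (1+1)^a'.1 := one_le_pow₀ (by norm_num)
  linarith

/-- Value of the basic sum. -/
noncomputable def Ehat (x : ℝ) (a1 a2 a3 : ℕ) : ℝ := ∑' N, coeff N (opB 0 (EE x a1 a2 a3))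

lemma total_Ehat {x : ℝ} (hx0 : 0 < x) (hx2 : x < 1/2) (m1 m2 : ℝ) (k : ℕ) :
    ∑ a ∈ antidiagonal k, ∑ a' ∈ antidiagonal a.2,
      (m1 ^ a.1 + m2 ^ a.1) * (m1 + m2) ^ a'.1 * (m1 ^ a'.2 + m2 ^ a'.2) *
        Ehat x a.1 a'.1 a'.2 =
      (∑' j, rho x (k+2) j) * ∑ a ∈ antidiagonal k, m1 ^ a.1 * m2 ^ a.2 := by
  refine HasSum.unique ?_ (total_hasSum hx0 hx2 m1 m2 k)
  simp only [map_sum, map_smul, smul_eq_mul]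
  refine hasSum_sum fun a ha => hasSum_sum fun a' ha' => ?_
  exact (EE_summable hx0 hx2 k a a' ha ha').hasSum.mul_left _

end PS

namespace PS

/-- nested sums -/
noncomputable def JJ (f : ℕ → ℕ → ℝ≥0∞) : ℕ → ℕ → ℝ≥0∞
  | 0 => fun N => if N = 0 then 1 else 0
  | r+1 => fun N => f r N * ∑ m ∈ range N, JJ f r m

lemma JJ_succ (f : ℕ → ℕ → ℝ≥0∞) (r N : ℕ) :
    JJ f (r+1) N = f r N * ∑ m ∈ range N, JJ f r m := rfl

lemma JJ_congr {f g : ℕ → ℕ → ℝ≥0∞} (r : ℕ) (h : ∀ i < r, f i = g i) : JJ f r = JJ g r := by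
  induction r with
  | zero => rfl
  | succ r ih =>
    ext N
    simp only [JJ]
    rw [h r (by omega), ih fun i hi => h i (by omega)]

open Classical in
lemma JJ_step (f : ℕ → ℕ → ℝ≥0∞) (n : ℕ) (P : ℕ → Prop) :
    ∑' v : Fin (n+1) → ℕ, (if StrictMono v ∧ (∀ i, 0 < v i) ∧ P (v (Fin.last n)) then
      ∏ i : Fin _, f (i : ℕ) (v i) else 0) =
    ∑' M, (if P M ∧ 0 < M then f n M * ∑' w : Fin n → ℕ,
      (if StrictMono w ∧ (∀ i, 0 < w i) ∧ (∀ i, w i < M) then ∏ i : Fin _, f (i : ℕ) (w i) else 0) else 0) := by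
  rw [← (Fin.snocEquiv (fun _ : Fin (n+1) => ℕ)).tsum_eq, ENNReal.tsum_prod']
  refine tsum_congr fun M => ?_
  split_ifs with hM
  · rw [← ENNReal.tsum_mul_left]
    refine tsum_congr fun w => ?_
    have hiff : (StrictMono (Fin.snocEquiv (fun _ : Fin (n+1) => ℕ) (M, w)) ∧
        (∀ i, 0 < Fin.snocEquiv (fun _ : Fin (n+1) => ℕ) (M, w) i) ∧
        P (Fin.snocEquiv (fun _ : Fin (n+1) => ℕ) (M, w) (Fin.last n))) ↔
        (StrictMono w ∧ (∀ i, 0 < w i) ∧ (∀ i, w i < M)) := by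
      simp only [Fin.snocEquiv_apply, Fin.snoc_last, hM.1, and_true, Fin.forall_fin_succ',
        Fin.snoc_castSucc, hM.2]
      constructor
      · rintro ⟨h1, h2⟩
        refine ⟨fun i j hij => ?_, h2, fun i => ?_⟩
        · simpa using h1 (Fin.castSucc_lt_castSucc_iff.2 hij)
        · simpa using h1 (Fin.castSucc_lt_last i)
      · rintro ⟨h1, h2, h3⟩
        refine ⟨fun i j hij => ?_, h2⟩
        induction j using Fin.lastCases with
        | last =>
          induction i using Fin.lastCases with
          | last => exact absurd hij (lt_irrefl _)
          | cast i => simpa using h3 i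
        | cast j =>
          induction i using Fin.lastCases with
          | last => exact absurd (hij.trans (Fin.castSucc_lt_last j)) (lt_irrefl _)
          | cast i => simpa using h1 (Fin.castSucc_lt_castSucc_iff.1 hij)
    simp only [hiff]
    split_ifs
    · rw [Fin.prod_univ_castSucc]
      simp [Fin.snocEquiv_apply, mul_comm]
    · simp
  · rw [ENNReal.tsum_eq_zero]
    intro w
    rw [if_neg]
    rintro ⟨_, h2, h3⟩
    exact hM ⟨by simpa using h3, by simpa using h2 (Fin.last n)⟩

open Classical in
lemma JJ_sum (f : ℕ → ℕ → ℝ≥0∞) (n : ℕ) (P : ℕ → Prop) :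
    ∑' v : Fin (n+1) → ℕ, (if StrictMono v ∧ (∀ i, 0 < v i) ∧ P (v (Fin.last n)) then
      ∏ i : Fin _, f (i : ℕ) (v i) else 0) = ∑' M, (if P M then JJ f (n+1) M else 0) := by
  induction n generalizing P with
  | zero =>
    rw [JJ_step]
    refine tsum_congr fun M => ?_
    rcases Nat.eq_zero_or_pos M with rfl | hM
    · simp [JJ]
    · simp only [hM, and_true, JJ]
      rw [Finset.sum_ite_eq', if_pos (show 0 ∈ range M by simpa using hM)]
      congr 2
      rw [tsum_eq_single default (fun b hb => absurd (Subsingleton.elim _ _) hb), if_pos]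
      · simp
      · exact ⟨fun i => i.elim0, fun i => i.elim0, fun i => i.elim0⟩
  | succ n ih =>
    rw [JJ_step]
    refine tsum_congr fun M => ?_
    rcases Nat.eq_zero_or_pos M with rfl | hM
    · simp [JJ]
    · simp only [hM, and_true]
      congr 1
      rw [JJ_succ, range_eq_tsum]
      congr 1
      refine Eq.trans ?_ ((ih (fun m => m < M)).trans (tsum_congr fun m => by congr))
      refine tsum_congr fun w => ?_
      congr 1
      apply propext
      constructor
      · rintro ⟨h1, h2, h3⟩; exact ⟨h1, h2, h3 _⟩
      · rintro ⟨h1, h2, h3⟩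
        exact ⟨h1, h2, fun i => (h1.monotone (Fin.le_last i)).trans_lt h3⟩

lemma SM_sum (f : ℕ → ℕ → ℝ≥0∞) (n : ℕ) :
    ∑' v : {v : Fin (n+1) → ℕ // StrictMono v ∧ ∀ i, 0 < v i}, ∏ i : Fin _, f (i : ℕ) (v.1 i) =
      ∑' M, JJ f (n+1) M := by
  classical
  have := JJ_sum f n (fun _ => True)
  simp only [and_true, if_true] at this
  rw [← this]
  refine (tsum_subtype {v : Fin (n+1) → ℕ | StrictMono v ∧ ∀ i, 0 < v i}
    (fun v => ∏ i : Fin _, f (i : ℕ) (v i))).trans ?_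
  refine tsum_congr fun v => ?_
  simp only [Set.indicator, Set.mem_ofPred_eq]

lemma tsum_pi_prod (n : ℕ) (g : Fin n → ℕ → ℝ≥0∞) :
    ∑' α : Fin n → ℕ, ∏ i, g i (α i) = ∏ i, ∑' t, g i t := by
  induction n with
  | zero =>
    rw [tsum_eq_single default (fun b hb => absurd (Subsingleton.elim _ _) hb)]
    simp
  | succ n ih =>
    rw [← (Fin.consEquiv (fun _ : Fin (n+1) => ℕ)).tsum_eq, ENNReal.tsum_prod',
      Fin.prod_univ_succ, ← ih, ← ENNReal.tsum_mul_right]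
    refine tsum_congr fun t => ?_
    rw [← ENNReal.tsum_mul_left]
    refine tsum_congr fun w => ?_
    rw [Fin.prod_univ_succ]
    simp [Fin.consEquiv]

/-- weights without the last factor -/
noncomputable def FF (x : ℝ) (a1 a2 : ℕ) (r n : ℕ) : ℝ :=
  1 / ((n:ℝ) - (if r ∈ Icc (a1+1) (a1+a2+1) then 2 * x else x)) *
    (if r = a1+a2+1 then 1 / ((n:ℝ) - x) else 1)

open PowerSeries

lemma JJ_opA {f : ℕ → ℕ → ℝ≥0∞} {r : ℕ} {h : PowerSeries ℝ} (c : ℝ) (hh : ∀ n, 0 ≤ coeff n h)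
    (H : ∀ N, JJ f r N = ENNReal.ofReal (coeff N h))
    (hf : ∀ N, f r N = ENNReal.ofReal (1 / ((N:ℝ) - c))) (N : ℕ) :
    JJ f (r+1) N = ENNReal.ofReal (coeff N (opA c h)) := by
  simp only [JJ, H]
  rw [← ENNReal.ofReal_sum_of_nonneg (fun i _ => hh i), hf, mul_comm, ← ENNReal.ofReal_mul
    (Finset.sum_nonneg fun i _ => hh i), coeff_opA]
  congr 1; ring

lemma JJ_FF {x : ℝ} (hx0 : 0 < x) (hx2 : x < 1/2) (a1 a2 a3 : ℕ) (N : ℕ) :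
    JJ (fun r n => ENNReal.ofReal (FF x a1 a2 r n)) (a1 + a2 + a3 + 2) N =
      ENNReal.ofReal (coeff N (EE x a1 a2 a3)) := by
  have hx : x < 1 := by linarith
  have hx2' : 2 * x < 1 := by linarith
  set f := fun r n => ENNReal.ofReal (FF x a1 a2 r n) with hf
  have s1 : ∀ r ≤ a1 + 1, ∀ N, JJ f r N = ENNReal.ofReal (coeff N (Phi x r)) := by
    intro r
    induction r with
    | zero => intro _ N; simp only [JJ, Phi_zero, coeff_one]; split_ifs <;> simp
    | succ r ih =>
      intro hr N
      rw [JJ_opA x (Phi_nonneg hx r) (ih (by omega)), Phi_succ]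
      intro N
      have h1 : ¬ (r ∈ Icc (a1+1) (a1+a2+1)) := by simp only [Finset.mem_Icc]; omega
      have h2 : ¬ (r = a1+a2+1) := by omega
      simp only [hf, FF, if_neg h1, if_neg h2, mul_one]
  have s2 : ∀ s ≤ a2, ∀ N, JJ f (a1+1+s) N =
      ENNReal.ofReal (coeff N (((opA (2*x))^s) (Phi x (a1+1)))) := by
    intro s
    induction s with
    | zero => intro _ N; exact s1 _ le_rfl N
    | succ s ih =>
      intro hs N
      rw [← add_assoc, JJ_opA (2*x) (opA_pow_nonneg hx2' (Phi_nonneg hx _) s) (ih (by omega)),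
        pow_succ']
      · rfl
      intro N
      have h1 : (a1+1+s ∈ Icc (a1+1) (a1+a2+1)) := by simp only [Finset.mem_Icc]; omega
      have h2 : ¬ (a1+1+s = a1+a2+1) := by omega
      simp only [hf, FF, if_pos h1, if_neg h2, mul_one]
  have s3 : ∀ s, ∀ N, JJ f (a1+a2+1+1+s) N = ENNReal.ofReal (coeff N (EE x a1 a2 s)) := by
    intro s
    induction s with
    | zero =>
      intro N
      have hnn := fun s => opA_pow_nonneg hx2' (Phi_nonneg hx (a1+1)) s
      rw [add_zero, JJ_succ, EE, pow_zero, Module.End.one_apply]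
      rw [show a1 + a2 + 1 = a1+1+a2 by ring]
      simp only [s2 a2 le_rfl]
      rw [← ENNReal.ofReal_sum_of_nonneg (fun i _ => hnn _ i), hf, mul_comm, ← ENNReal.ofReal_mul
        (Finset.sum_nonneg fun i _ => hnn _ i), pow_succ', Module.End.mul_apply, coeff_opB,
        coeff_opA]
      have h1 : (a1+1+a2 ∈ Icc (a1+1) (a1+a2+1)) := by simp only [Finset.mem_Icc]; omega
      have h2 : (a1+1+a2 = a1+a2+1) := by omega
      simp only [FF, if_pos h1, if_pos h2]
      congr 1; ring
    | succ s ih =>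
      intro N
      rw [← add_assoc, JJ_opA x (EE_nonneg hx hx2' _ _ _) ih, EE, EE, pow_succ' (opA x)]
      · rfl
      intro N
      have h1 : ¬ (a1+a2+1+1+s ∈ Icc (a1+1) (a1+a2+1)) := by simp only [Finset.mem_Icc]; omega
      have h2 : ¬ (a1+a2+1+1+s = a1+a2+1) := by omega
      simp only [hf, FF, if_neg h1, if_neg h2, mul_one]
  rw [← s3 a3 N]
  congr 1; ring

/-- weights with the last factor -/
noncomputable def FL (x : ℝ) (a1 a2 k : ℕ) (r n : ℕ) : ℝ :=
  FF x a1 a2 r n * (if r = k+1 then 1 / (n:ℝ) else 1)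

lemma JJ_FL {x : ℝ} (hx0 : 0 < x) (hx2 : x < 1/2) (a1 a2 a3 : ℕ) (N : ℕ) :
    JJ (fun r n => ENNReal.ofReal (FL x a1 a2 (a1+a2+a3) r n)) (a1 + a2 + a3 + 2) N =
      ENNReal.ofReal (coeff N (opB 0 (EE x a1 a2 a3))) := by
  have h := JJ_FF hx0 hx2 a1 a2 a3 N
  have e := JJ_congr (f := fun r n => ENNReal.ofReal (FL x a1 a2 (a1+a2+a3) r n))
    (g := fun r n => ENNReal.ofReal (FF x a1 a2 r n)) (a1+a2+a3+1) (by
      intro i hi; ext n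
      have : ¬ (i = a1+a2+a3+1) := by omega
      simp only [FL, if_neg this, mul_one])
  rw [JJ_succ] at h ⊢
  rw [e, FL, if_pos rfl, mul_comm (FF _ _ _ _ _), ENNReal.ofReal_mul (by positivity), mul_assoc, h,
    ← ENNReal.ofReal_mul (by positivity), coeff_opB]
  congr 1; simp; ring

end PS

namespace PS

noncomputable def wt (a1 a2 r t : ℕ) : ℝ :=
  (if r ∈ Icc (a1+1) (a1+a2+1) then (2:ℝ)^(t-1) else 1) *
    (if r = a1+a2+1 then 1 - (2:ℝ)^((1:ℤ)-(t:ℤ)) else 1)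

noncomputable def gt (x : ℝ) (a1 a2 k r t n : ℕ) : ℝ :=
  if t = 0 then 0 else wt a1 a2 r t * x^(t-1) * (1/(n:ℝ))^t * (if r = k+1 then 1/(n:ℝ) else 1) *
    (if r = a1+a2+1 then 1/x else 1)

lemma two_zpow_le {t : ℕ} (ht : t ≠ 0) : (2:ℝ)^((1:ℤ)-(t:ℤ)) ≤ 1 := by
  apply zpow_le_one_of_nonpos₀
  · norm_num
  · omega

lemma wt_nonneg (a1 a2 r : ℕ) {t : ℕ} (ht : t ≠ 0) : 0 ≤ wt a1 a2 r t := by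
  unfold wt
  have := two_zpow_le ht
  apply mul_nonneg
  · split_ifs <;> positivity
  · split_ifs <;> linarith

lemma gt_nonneg {x : ℝ} (hx0 : 0 < x) (a1 a2 k r t n : ℕ) : 0 ≤ gt x a1 a2 k r t n := by
  unfold gt
  split_ifs with h <;> first | positivity | (have := wt_nonneg a1 a2 r h; positivity)

lemma hs_of {f g : ℕ → ℝ} {a b : ℝ} (h : HasSum f a) (hf : ∀ n, g n = f n) (hb : b = a) :
    HasSum g b := by
  rw [hb, funext hf]; exact h

lemma geo {y n : ℝ} (hy : 0 ≤ y) (hn : y < n) :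
    HasSum (fun s : ℕ => y^s * (1/n)^(s+1)) (1/(n-y)) := by
  have hn0 : 0 < n := by linarith
  have h := (hasSum_geometric_of_lt_one (r := y/n) (by positivity) (by rw [div_lt_one hn0]; exact hn)).mul_left (1/n)
  refine hs_of h (fun s => ?_) ?_
  · rw [one_div_pow, div_pow, pow_succ]; field_simp
  · have : n - y ≠ 0 := by linarith
    have : 1 - y/n ≠ 0 := by
      rw [sub_ne_zero]; intro h; have := h.symm; rw [div_eq_one_iff_eq hn0.ne'] at this; linarith
    field_simp

lemma two_pow_zpow (s : ℕ) : (2:ℝ)^s * (1 - (2:ℝ)^((1:ℤ)-((s+1:ℕ):ℤ))) = 2^s - 1 := by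
  have : (1:ℤ)-((s+1:ℕ):ℤ) = -(s:ℤ) := by push_cast; ring
  rw [this, zpow_neg, zpow_natCast, mul_sub, mul_inv_cancel₀ (by positivity), mul_one]

lemma gt_hasSum {x : ℝ} (hx0 : 0 < x) (hx2 : x < 1/2) (a1 a2 k r : ℕ) {n : ℕ} (hn : 0 < n) :
    HasSum (fun s => gt x a1 a2 k r (s+1) n) (FL x a1 a2 k r n) := by
  have hn1 : (1:ℝ) ≤ n := by exact_mod_cast hn
  have key : HasSum (fun s => wt a1 a2 r (s+1) * x^s * (1/(n:ℝ))^(s+1) *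
      (if r = a1+a2+1 then 1/x else 1)) (FF x a1 a2 r n) := by
    have g1 := geo (y := x) (n := n) hx0.le (by linarith)
    have g2 := geo (y := 2*x) (n := n) (by linarith) (by linarith)
    unfold wt FF
    by_cases hj : r = a1+a2+1
    · have hI : r ∈ Icc (a1+1) (a1+a2+1) := by simp only [Finset.mem_Icc]; omega
      simp only [if_pos hI, if_pos hj]
      refine hs_of ((g2.sub g1).mul_right (1/x)) (fun s => ?_) ?_
      · rw [Nat.add_sub_cancel, two_pow_zpow, mul_pow]; ring
      · have h1 : (n:ℝ) - 2*x ≠ 0 := by linarith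
        have h2 : (n:ℝ) - x ≠ 0 := by linarith
        field_simp
        ring
    · simp only [if_neg hj, mul_one]
      by_cases hI : r ∈ Icc (a1+1) (a1+a2+1)
      · simp only [if_pos hI]
        refine hs_of g2 (fun s => ?_) rfl
        rw [Nat.add_sub_cancel, mul_pow]
      · simp only [if_neg hI, one_mul]
        exact g1
  unfold FL
  refine hs_of (key.mul_right (if r = k+1 then 1/(n:ℝ) else 1)) (fun s => ?_) rfl
  simp only [gt, if_neg (Nat.succ_ne_zero s), Nat.add_sub_cancel]
  ring

lemma gt_tsum {x : ℝ} (hx0 : 0 < x) (hx2 : x < 1/2) (a1 a2 k r : ℕ) {n : ℕ} (hn : 0 < n) :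
    ∑' t, ENNReal.ofReal (gt x a1 a2 k r t n) = ENNReal.ofReal (FL x a1 a2 k r n) := by
  have h := gt_hasSum hx0 hx2 a1 a2 k r hn
  rw [tsum_split _ 0, ← h.tsum_eq,
    ENNReal.ofReal_tsum_of_nonneg (fun s => gt_nonneg hx0 _ _ _ _ _ _) h.summable]
  have h0 : gt x a1 a2 k r 0 n = 0 := by simp [gt]
  simp only [Finset.range_zero, Finset.sum_empty, zero_add, h0, ENNReal.ofReal_zero]
  exact tsum_congr fun s => by rw [add_comm]

lemma sum_all {x : ℝ} (hx0 : 0 < x) (hx2 : x < 1/2) (a1 a2 a3 : ℕ) :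
    ∑' α : Fin (a1+a2+a3+2) → ℕ, ∑' v : {v : Fin (a1+a2+a3+2) → ℕ // StrictMono v ∧ ∀ i, 0 < v i},
      ∏ i : Fin _, ENNReal.ofReal (gt x a1 a2 (a1+a2+a3) i (α i) (v.1 i)) =
    ENNReal.ofReal (Ehat x a1 a2 a3) := by
  rw [ENNReal.tsum_comm]
  have : ∀ v : {v : Fin (a1+a2+a3+2) → ℕ // StrictMono v ∧ ∀ i, 0 < v i},
    ∑' α : Fin (a1+a2+a3+2) → ℕ,
      ∏ i : Fin _, ENNReal.ofReal (gt x a1 a2 (a1+a2+a3) i (α i) (v.1 i)) =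
      ∏ i : Fin _, (fun r n => ENNReal.ofReal (FL x a1 a2 (a1+a2+a3) r n)) (i:ℕ) (v.1 i) := by
    intro v
    rw [tsum_pi_prod _ (fun i t => ENNReal.ofReal (gt x a1 a2 (a1+a2+a3) i t (v.1 i)))]
    refine Finset.prod_congr rfl fun i _ => ?_
    rw [gt_tsum hx0 hx2 _ _ _ _ (v.2.2 i)]
  refine (tsum_congr this).trans ?_
  refine (SM_sum (fun r n => ENNReal.ofReal (FL x a1 a2 (a1+a2+a3) r n)) (a1+a2+a3+1)).trans ?_
  rw [Ehat, ENNReal.ofReal_tsum_of_nonneg]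
  · refine tsum_congr fun M => ?_
    exact JJ_FL hx0 hx2 a1 a2 a3 M
  · exact opB0_nonneg (EE_nonneg (by linarith) (by linarith) _ _ _)
  · exact EE_summable hx0 hx2 (a1+a2+a3) (a1, a2+a3) (a2,a3) (by simp; ring) (by simp)

end PS

namespace PS

noncomputable def WW (a1 a2 : ℕ) (e : ℕ → ℕ) : ℝ :=
  (2:ℝ)^((∑ r ∈ Icc (a1+1) (a1+a2+1), e r) - 1 - a2) *
    (1 - (2:ℝ)^((1:ℤ)-(e (a1+a2+1):ℤ)))

lemma prod_delta {n j : ℕ} (hj : j < n) (F : ℕ → ℝ) :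
    ∏ i : Fin n, (if (i:ℕ) = j then F i else 1) = F j := by
  rw [Fin.prod_univ_eq_prod_range (fun i => if i = j then F i else 1) n, Finset.prod_ite_eq',
    if_pos (Finset.mem_range.2 hj)]

lemma ext_coe {n : ℕ} (α : Fin n → ℕ) (i : Fin n) : ext α i = α i := by
  simp [_root_.ext]

lemma prod_two {n a1 a2 : ℕ} (h : a1 + a2 + 1 < n) (e : ℕ → ℕ) (he : ∀ i < n, 0 < e i) :
    ∏ i : Fin n, (if (i:ℕ) ∈ Icc (a1+1) (a1+a2+1) then (2:ℝ)^(e i - 1) else 1) =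
      (2:ℝ)^((∑ r ∈ Icc (a1+1) (a1+a2+1), e r) - 1 - a2) := by
  rw [Fin.prod_univ_eq_prod_range
    (fun i => if i ∈ Icc (a1+1) (a1+a2+1) then (2:ℝ)^(e i - 1) else 1) n,
    Finset.prod_ite_mem, Finset.inter_eq_right.2, Finset.prod_pow_eq_pow_sum]
  · congr 1
    have : ∑ r ∈ Icc (a1+1) (a1+a2+1), e r = ∑ r ∈ Icc (a1+1) (a1+a2+1), ((e r - 1) + 1) := by
      refine Finset.sum_congr rfl fun r hr => ?_
      simp only [Finset.mem_Icc] at hr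
      have := he r (by omega)
      omega
    rw [this, Finset.sum_add_distrib, Finset.sum_const, Nat.card_Icc]
    simp only [smul_eq_mul, mul_one]
    omega
  · intro r hr
    simp only [Finset.mem_Icc, Finset.mem_range] at hr ⊢
    omega

lemma gt_prod {x : ℝ} (hx0 : 0 < x) (a1 a2 k l : ℕ) (hk : a1 + a2 ≤ k)
    (α : Fin (k+2) → ℕ) (hα : ∀ i, 0 < α i) (hs : ∑ i, α i = k + l + 3) (v : Fin (k+2) → ℕ) :
    ∏ i : Fin (k+2), gt x a1 a2 k i (α i) (v i) =
      x^l * WW a1 a2 (ext α) * ∏ i, ((v i : ℝ)^(incLast α i))⁻¹ := by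
  have e : ∀ i : Fin (k+2), gt x a1 a2 k i (α i) (v i) =
      (if (i:ℕ) ∈ Icc (a1+1) (a1+a2+1) then (2:ℝ)^(ext α i - 1) else 1) *
      (if (i:ℕ) = a1+a2+1 then 1 - (2:ℝ)^((1:ℤ)-(ext α i:ℤ)) else 1) *
      x^(α i - 1) * (if (i:ℕ) = a1+a2+1 then 1/x else 1) * ((v i : ℝ)^(incLast α i))⁻¹ := by
    intro i
    have h1 : (1/(v i:ℝ))^(α i) * (if (i:ℕ) = k+1 then 1/(v i:ℝ) else 1) =
        ((v i : ℝ)^(incLast α i))⁻¹ := by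
      simp only [incLast, show k + 2 - 1 = k + 1 from rfl]
      split_ifs
      · rw [← pow_succ, one_div, inv_pow]
      · rw [mul_one, one_div, inv_pow]
    rw [← h1]
    simp only [gt, if_neg (hα i).ne', wt, ext_coe]
    ring
  simp only [e, Finset.prod_mul_distrib]
  have he : ∀ i < k + 2, 0 < ext α i := by
    intro i hi; simp only [_root_.ext, dif_pos hi]; exact hα _
  rw [prod_two (by omega) (ext α) he,
    prod_delta (by omega) (fun i => 1 - (2:ℝ)^((1:ℤ)-(ext α i:ℤ))),
    prod_delta (by omega) (fun i => 1/x), Finset.prod_pow_eq_pow_sum]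
  have h2 : ∑ i, (α i - 1) = l + 1 := by
    have : ∑ i, α i = ∑ i, ((α i - 1) + 1) := Finset.sum_congr rfl fun i _ => by
      have := hα i; omega
    rw [this, Finset.sum_add_distrib] at hs
    simp at hs
    omega
  rw [h2, WW, pow_succ x]
  field_simp

noncomputable def mzvE {n : ℕ} (α : Fin n → ℕ) : ℝ≥0∞ :=
  ∑' v : {v : Fin n → ℕ // StrictMono v ∧ ∀ i, 0 < v i},
    ∏ i, ENNReal.ofReal (((v.1 i : ℝ)^(α i))⁻¹)

lemma mzv_eq {n : ℕ} (α : Fin n → ℕ) : mzv α = (mzvE α).toReal := by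
  rw [mzvE, ENNReal.tsum_toReal_eq]
  · unfold mzv
    refine tsum_congr fun v => ?_
    rw [ENNReal.toReal_prod]
    refine Finset.prod_congr rfl fun i _ => ?_
    rw [ENNReal.toReal_ofReal (by positivity)]
  · intro v
    exact ENNReal.prod_ne_top fun i _ => ENNReal.ofReal_ne_top

lemma WW_nonneg (a1 a2 : ℕ) (e : ℕ → ℕ) (h : e (a1+a2+1) ≠ 0) : 0 ≤ WW a1 a2 e := by
  have := two_zpow_le h
  unfold WW
  apply mul_nonneg (by positivity)
  linarith

noncomputable def cE (a1 a2 k l : ℕ) : ℝ≥0∞ :=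
  ∑' α : Comp (k+2) (k+l+3), ENNReal.ofReal (WW a1 a2 (ext α.1)) * mzvE (incLast α.1)

lemma gen_E {x : ℝ} (hx0 : 0 < x) (hx2 : x < 1/2) (a1 a2 a3 : ℕ) :
    ∑' l, ENNReal.ofReal (x^l) * cE a1 a2 (a1+a2+a3) l = ENNReal.ofReal (Ehat x a1 a2 a3) := by
  rw [← sum_all hx0 hx2]
  set k := a1+a2+a3 with hk
  set G : (Fin (k+2) → ℕ) → ℝ≥0∞ := fun α =>
    ∑' v : {v : Fin (k+2) → ℕ // StrictMono v ∧ ∀ i, 0 < v i},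
      ∏ i : Fin _, ENNReal.ofReal (gt x a1 a2 k i (α i) (v.1 i)) with hG
  let φ : (Σ l, Comp (k+2) (k+l+3)) → (Fin (k+2) → ℕ) := fun p => p.2.1
  have hinj : Function.Injective φ := by
    rintro ⟨l, α, h1, h2⟩ ⟨l', α', h1', h2'⟩ h
    simp only [φ] at h
    subst h
    have : l = l' := by omega
    subst this
    rfl
  have hsupp : Function.support G ⊆ Set.range φ := by
    intro α hα
    have h0 : ∀ i : Fin (k+2), ¬ ∀ n : ℕ, gt x a1 a2 k i (α i) n = 0 := by
      intro i hi
      apply hα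
      simp only [hG]
      rw [ENNReal.tsum_eq_zero]
      intro v
      exact Finset.prod_eq_zero (Finset.mem_univ i) (by rw [hi, ENNReal.ofReal_zero])
    have hpos : ∀ i, 0 < α i := by
      intro i
      by_contra hc
      exact h0 i fun n => by simp [gt, show α i = 0 by omega]
    have hj : 1 < α ⟨a1+a2+1, by omega⟩ := by
      by_contra hc
      have h1 : α ⟨a1+a2+1, by omega⟩ = 1 := by
        have := hpos ⟨a1+a2+1, by omega⟩; omega
      exact h0 ⟨a1+a2+1, by omega⟩ fun n => by simp [gt, wt, h1]
    have hlt : ∑ i : Fin (k+2), 1 < ∑ i, α i :=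
      Finset.sum_lt_sum (fun i _ => hpos i) ⟨_, Finset.mem_univ _, hj⟩
    simp at hlt
    exact ⟨⟨∑ i, α i - (k+3), α, hpos, by omega⟩, rfl⟩
  rw [← hinj.tsum_eq hsupp, ENNReal.tsum_sigma']
  refine tsum_congr fun l => ?_
  rw [cE, ← ENNReal.tsum_mul_left]
  refine tsum_congr fun α => ?_
  have hW : 0 ≤ WW a1 a2 (ext α.1) := by
    apply WW_nonneg
    have : a1 + a2 + 1 < k + 2 := by omega
    simp only [_root_.ext, dif_pos this]
    exact (α.2.1 _).ne'
  simp only [hG, φ, mzvE]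
  rw [← mul_assoc, ← ENNReal.ofReal_mul (by positivity), ← ENNReal.tsum_mul_left]
  refine tsum_congr fun v => ?_
  rw [← ENNReal.ofReal_prod_of_nonneg (fun i _ => by positivity),
    ← ENNReal.ofReal_prod_of_nonneg (fun i _ => gt_nonneg hx0 _ _ _ _ _ _),
    ← ENNReal.ofReal_mul (by positivity), gt_prod hx0 a1 a2 k l (by omega) α.1 α.2.1 α.2.2]

lemma cE_ne_top (a1 a2 a3 l : ℕ) : cE a1 a2 (a1+a2+a3) l ≠ ∞ := by
  have h := gen_E (x := 1/4) (by norm_num) (by norm_num) a1 a2 a3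
  have h1 := ENNReal.ne_top_of_tsum_ne_top (h ▸ ENNReal.ofReal_ne_top) l
  intro hc
  rw [hc, ENNReal.mul_top] at h1
  · exact h1 rfl
  · rw [Ne, ENNReal.ofReal_eq_zero, not_le]; positivity

lemma term_eq (a1 a2 a3 l : ℕ) (α : Comp (a1+a2+a3+2) (a1+a2+a3+l+3)) :
    WW a1 a2 (ext α.1) * mzv (incLast α.1) =
      (ENNReal.ofReal (WW a1 a2 (ext α.1)) * mzvE (incLast α.1)).toReal := by
  have hW : 0 ≤ WW a1 a2 (ext α.1) := by
    apply WW_nonneg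
    have : a1 + a2 + 1 < a1+a2+a3 + 2 := by omega
    simp only [_root_.ext, dif_pos this]
    exact (α.2.1 _).ne'
  rw [ENNReal.toReal_mul, ENNReal.toReal_ofReal hW, mzv_eq]

lemma term_hasSum (a1 a2 a3 l : ℕ) :
    HasSum (fun α : Comp (a1+a2+a3+2) (a1+a2+a3+l+3) =>
      WW a1 a2 (ext α.1) * mzv (incLast α.1)) (cE a1 a2 (a1+a2+a3) l).toReal := by
  have h := cE_ne_top a1 a2 a3 l
  simp only [term_eq]
  rw [cE] at h ⊢
  rw [ENNReal.tsum_toReal_eq (ENNReal.ne_top_of_tsum_ne_top h)]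
  exact ENNReal.hasSum_toReal h

lemma gen_hasSum {x : ℝ} (hx0 : 0 < x) (hx2 : x < 1/2) (a1 a2 a3 : ℕ) :
    HasSum (fun l => (cE a1 a2 (a1+a2+a3) l).toReal * x^l) (Ehat x a1 a2 a3) := by
  have h := gen_E hx0 hx2 a1 a2 a3
  have ht : ∑' l, ENNReal.ofReal (x^l) * cE a1 a2 (a1+a2+a3) l ≠ ∞ := h ▸ ENNReal.ofReal_ne_top
  have h1 := ENNReal.hasSum_toReal ht
  rw [← ENNReal.tsum_toReal_eq (ENNReal.ne_top_of_tsum_ne_top ht), h, ENNReal.toReal_ofReal] at h1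
  · refine hs_of h1 (fun l => ?_) rfl
    rw [ENNReal.toReal_mul, ENNReal.toReal_ofReal (by positivity), mul_comm]
  · exact tsum_nonneg (opB0_nonneg (EE_nonneg (by linarith) (by linarith) _ _ _))

end PS

namespace PS

lemma mzvE_one (s : ℕ) : mzvE ![s] = ∑' j : ℕ, ENNReal.ofReal ((1/((j+1:ℕ):ℝ))^s) := by
  have h := SM_sum (fun _ m => ENNReal.ofReal (((m:ℝ)^s)⁻¹)) 0
  have h1 : mzvE ![s] = ∑' v : {v : Fin (0+1) → ℕ // StrictMono v ∧ ∀ i, 0 < v i},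
      ∏ i : Fin _, (fun (_ : ℕ) (m : ℕ) => ENNReal.ofReal (((m:ℝ)^s)⁻¹)) (i : ℕ) (v.1 i) := by
    unfold mzvE
    refine tsum_congr fun v => Finset.prod_congr rfl fun i _ => ?_
    have : ![s] i = s := by fin_cases i; rfl
    rw [this]
  rw [h1, h, tsum_split _ 0]
  simp only [JJ_succ, JJ, Finset.range_zero, Finset.sum_empty, zero_add, mul_zero]
  refine tsum_congr fun j => ?_
  rw [Finset.sum_ite_eq', if_pos (by simp), mul_one, add_comm, one_div, inv_pow]

lemma geo2 {x n : ℝ} (hx : 0 ≤ x) (hn : x < n) :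
    HasSum (fun l : ℕ => ((l:ℝ)+1) * x^l * (1/n)^(l+2)) ((1/(n-x))^2) := by
  have hn0 : 0 < n := by linarith
  have h := (hasSum_choose_mul_geometric_of_norm_lt_one (𝕜 := ℝ) 1 (r := x/n) (by
    rw [Real.norm_of_nonneg (by positivity), div_lt_one hn0]; exact hn)).mul_left ((1/n)^2)
  refine hs_of h (fun l => ?_) ?_
  · rw [Nat.choose_one_right, pow_add, one_div_pow n l, div_pow]
    push_cast
    ring
  · have h1 : n - x ≠ 0 := by linarith
    have h2 : 1 - x/n = (n-x)/n := by field_simp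
    rw [h2, show (1:ℕ) + 1 = 2 from rfl, div_pow, div_pow, div_pow]
    field_simp

lemma rhs_hasSum {x : ℝ} (hx0 : 0 < x) (hx2 : x < 1/2) (k : ℕ) :
    HasSum (fun l : ℕ => ((l:ℝ)+1) * mzv ![k+l+4] * x^l) (∑' j, rho x (k+2) j) := by
  have hE : ∑' l : ℕ, ENNReal.ofReal (((l:ℝ)+1) * x^l) * mzvE ![k+l+4] =
      ENNReal.ofReal (∑' j, rho x (k+2) j) := by
    rw [ENNReal.ofReal_tsum_of_nonneg (rho_nonneg _) (rho_summable hx2 _)]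
    simp only [mzvE_one, ← ENNReal.tsum_mul_left]
    rw [ENNReal.tsum_comm]
    refine tsum_congr fun j => ?_
    have hj : (1:ℝ) ≤ ((j+1:ℕ):ℝ) := by push_cast; linarith [(Nat.cast_nonneg j : (0:ℝ) ≤ j)]
    have h := (geo2 (x := x) (n := ((j+1:ℕ):ℝ)) hx0.le (by linarith)).mul_right
      ((1/((j+1:ℕ):ℝ))^(k+2))
    rw [rho, ← h.tsum_eq, ENNReal.ofReal_tsum_of_nonneg (fun l => by positivity) h.summable]
    refine tsum_congr fun l => ?_
    rw [← ENNReal.ofReal_mul (by positivity)]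
    congr 1
    rw [show k + l + 4 = (l+2) + (k+2) by ring, pow_add]
    ring
  have ht : ∑' l : ℕ, ENNReal.ofReal (((l:ℝ)+1) * x^l) * mzvE ![k+l+4] ≠ ∞ :=
    hE ▸ ENNReal.ofReal_ne_top
  have h1 := ENNReal.hasSum_toReal ht
  rw [← ENNReal.tsum_toReal_eq (ENNReal.ne_top_of_tsum_ne_top ht), hE,
    ENNReal.toReal_ofReal (tsum_nonneg (rho_nonneg _))] at h1
  refine hs_of h1 (fun l => ?_) rfl
  rw [ENNReal.toReal_mul, ENNReal.toReal_ofReal (by positivity), mzv_eq]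
  ring

lemma uniq (d : ℕ → ℝ) (h : ∀ x : ℝ, 0 < x → x < 1/2 → HasSum (fun l => d l * x^l) 0) :
    ∀ l, d l = 0 := by
  intro l
  induction l using Nat.strong_induction_on with
  | _ l ih =>
  have hs := (h (1/4) (by norm_num) (by norm_num)).summable.abs
  set C := ∑' i, |d i * (1/4:ℝ)^i| with hC
  have hC0 : 0 ≤ C := tsum_nonneg fun _ => abs_nonneg _
  have hb : ∀ i, |d i| ≤ C * 4^i := by
    intro i
    have h1 := hs.le_tsum i (fun _ _ => abs_nonneg _)
    rw [abs_mul, abs_of_nonneg (by positivity : (0:ℝ) ≤ (1/4)^i), one_div_pow] at h1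
    rw [← hC, mul_one_div, div_le_iff₀ (by positivity)] at h1
    exact h1
  have key : ∀ x : ℝ, 0 < x → x < 1/8 → |d l| ≤ 2 * C * 4^(l+1) * x := by
    intro x h0 h8
    have h1 := (hasSum_nat_add_iff' (l+1)).2 (h x h0 (by linarith))
    rw [Finset.sum_range_succ, Finset.sum_eq_zero (fun i hi => by
      rw [ih i (Finset.mem_range.1 hi), zero_mul])] at h1
    have h2 := (hasSum_geometric_of_lt_one (r := 4*x) (by positivity) (by linarith)).mul_left
      (C * (4*x)^(l+1))
    have h3 := tsum_of_norm_bounded h2 (f := fun n => d (n+(l+1)) * x^(n+(l+1))) (fun i => by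
      rw [Real.norm_eq_abs, abs_mul, abs_of_nonneg (by positivity : 0 ≤ x^(i+(l+1)))]
      calc _ ≤ C * 4^(i+(l+1)) * x^(i+(l+1)) :=
            mul_le_mul_of_nonneg_right (hb _) (by positivity)
        _ = _ := by rw [mul_pow, mul_pow]; ring)
    rw [h1.tsum_eq, Real.norm_eq_abs, zero_add, zero_sub, abs_neg, abs_mul,
      abs_of_nonneg (by positivity : 0 ≤ x^l)] at h3
    have h4 : (1 - 4*x)⁻¹ ≤ 2 := by
      rw [inv_le_comm₀ (by linarith) (by norm_num)]; linarith
    have h5 : |d l| * x^l ≤ (2 * C * 4^(l+1) * x) * x^l :=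
      calc _ ≤ _ := h3
        _ ≤ C * (4*x)^(l+1) * 2 := mul_le_mul_of_nonneg_left h4 (by positivity)
        _ = _ := by rw [mul_pow]; ring
    exact le_of_mul_le_mul_right h5 (by positivity)
  by_contra hne
  have hpos : 0 < |d l| := abs_pos.2 hne
  set K := 2 * C * 4^(l+1) with hK
  have hK0 : 0 ≤ K := by positivity
  have h1 := key (min (1/16) (|d l| / (2*(K+1)))) (by positivity)
    (lt_of_le_of_lt (min_le_left _ _) (by norm_num))
  have h2 : K * min (1/16) (|d l| / (2*(K+1))) ≤ K * (|d l| / (2*(K+1))) :=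
    mul_le_mul_of_nonneg_left (min_le_right _ _) hK0
  have h3 : K * (|d l| / (2*(K+1))) < |d l| := by
    rw [mul_div_assoc', div_lt_iff₀ (by positivity)]
    nlinarith
  linarith

lemma lhs_hasSum (k l : ℕ) (m1 m2 : ℝ) :
    HasSum (fun α : Comp (k + 2) (k + l + 3) =>
      ∑ a ∈ antidiagonal k, ∑ a' ∈ antidiagonal a.2,
        (m1 ^ a.1 + m2 ^ a.1) * (m1 + m2) ^ a'.1 * (m1 ^ a'.2 + m2 ^ a'.2) *
          (2 : ℝ) ^ ((∑ r ∈ Finset.Icc (a.1 + 1) (a.1 + a'.1 + 1), ext α.1 r)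
              - 1 - a'.1) *
          (1 - (2 : ℝ) ^ ((1 : ℤ) - (ext α.1 (a.1 + a'.1 + 1) : ℤ))) *
          mzv (incLast α.1))
      (∑ a ∈ antidiagonal k, ∑ a' ∈ antidiagonal a.2,
        (m1 ^ a.1 + m2 ^ a.1) * (m1 + m2) ^ a'.1 * (m1 ^ a'.2 + m2 ^ a'.2) *
          (cE a.1 a'.1 k l).toReal) := by
  refine hasSum_sum fun a ha => hasSum_sum fun a' ha' => ?_
  rw [HasAntidiagonal.mem_antidiagonal] at ha ha'
  have hk : k = a.1 + a'.1 + a'.2 := by omega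
  subst hk
  have h := (term_hasSum a.1 a'.1 a'.2 l).mul_left
    ((m1 ^ a.1 + m2 ^ a.1) * (m1 + m2) ^ a'.1 * (m1 ^ a'.2 + m2 ^ a'.2))
  refine h.congr_fun fun α => ?_
  rw [WW]; ring

end PS

theorem parameter_specialization (k ℓ : ℕ) (μ₁ μ₂ : ℝ) :
    (∑' α : Comp (k + 2) (k + ℓ + 3),
      ∑ a ∈ antidiagonal k, ∑ a' ∈ antidiagonal a.2,
        (μ₁ ^ a.1 + μ₂ ^ a.1) * (μ₁ + μ₂) ^ a'.1 * (μ₁ ^ a'.2 + μ₂ ^ a'.2) *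
          (2 : ℝ) ^ ((∑ r ∈ Finset.Icc (a.1 + 1) (a.1 + a'.1 + 1), ext α.1 r)
              - 1 - a'.1) *
          (1 - (2 : ℝ) ^ ((1 : ℤ) - (ext α.1 (a.1 + a'.1 + 1) : ℤ))) *
          mzv (incLast α.1)) =
    (ℓ + 1 : ℝ) * mzv ![k + ℓ + 4] *
      ∑ a ∈ antidiagonal k, μ₁ ^ a.1 * μ₂ ^ a.2 := by
  rw [(PS.lhs_hasSum k ℓ μ₁ μ₂).tsum_eq, ← sub_eq_zero]
  refine PS.uniq (fun l => (∑ a ∈ antidiagonal k, ∑ a' ∈ antidiagonal a.2,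
        (μ₁ ^ a.1 + μ₂ ^ a.1) * (μ₁ + μ₂) ^ a'.1 * (μ₁ ^ a'.2 + μ₂ ^ a'.2) *
          (PS.cE a.1 a'.1 k l).toReal) - (l + 1 : ℝ) * mzv ![k + l + 4] *
      ∑ a ∈ antidiagonal k, μ₁ ^ a.1 * μ₂ ^ a.2) ?_ ℓ
  intro x hx0 hx2
  have h1 := (PS.rhs_hasSum hx0 hx2 k).mul_right (∑ a ∈ antidiagonal k, μ₁ ^ a.1 * μ₂ ^ a.2)
  have h2 : HasSum (fun l => ∑ a ∈ antidiagonal k, ∑ a' ∈ antidiagonal a.2,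
        (μ₁ ^ a.1 + μ₂ ^ a.1) * (μ₁ + μ₂) ^ a'.1 * (μ₁ ^ a'.2 + μ₂ ^ a'.2) *
          ((PS.cE a.1 a'.1 k l).toReal * x^l))
      (∑ a ∈ antidiagonal k, ∑ a' ∈ antidiagonal a.2,
        (μ₁ ^ a.1 + μ₂ ^ a.1) * (μ₁ + μ₂) ^ a'.1 * (μ₁ ^ a'.2 + μ₂ ^ a'.2) *
          PS.Ehat x a.1 a'.1 a'.2) := by
    refine hasSum_sum fun a ha => hasSum_sum fun a' ha' => ?_
    rw [HasAntidiagonal.mem_antidiagonal] at ha ha'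
    have hk : k = a.1 + a'.1 + a'.2 := by omega
    rw [hk]
    exact (PS.gen_hasSum hx0 hx2 a.1 a'.1 a'.2).mul_left _
  refine PS.hs_of (h2.sub h1) (fun l => ?_) ?_
  · rw [sub_mul, Finset.sum_mul]
    congr 1
    · refine Finset.sum_congr rfl fun a _ => ?_
      rw [Finset.sum_mul]
      exact Finset.sum_congr rfl fun a' _ => by ring
    · ring
  · rw [PS.total_Ehat hx0 hx2, sub_self]
end

section
/- Ohno's relation in a special case: for nonnegative integers a_1, a_2 and ℓ ≥ 0, ∑_{b_1+b_2=ℓ} ∑_{|α|=a_1+b_1+1, |β|=a_2+b_2+1} ζ(α_0,...,α_{a_1}+1, β_0,...,β_{a_2}+1) = ∑_{b_1+b_2=ℓ} ζ(a_2+b_2+2, a_1+b_1+2). -/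
open Finset

/-- the connector building block -/
noncomputable def ohG (x : ℝ) (m : ℕ) : ℝ := ∏ j ∈ range m, ((j : ℝ) + 1 - x)

/-- the connector -/
noncomputable def ohC (x : ℝ) (m n : ℕ) : ℝ := ohG x m * ohG x n / ohG x (m + n)

theorem ohG_pos {x : ℝ} (hx : x < 1) (m : ℕ) : 0 < ohG x m := by
  apply Finset.prod_pos
  intro j _
  have : (0 : ℝ) ≤ j := Nat.cast_nonneg j
  linarith

theorem ohG_succ (x : ℝ) (m : ℕ) : ohG x (m + 1) = ohG x m * ((m : ℝ) + 1 - x) := by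
  simp [ohG, Finset.prod_range_succ]

theorem ohC_comm (x : ℝ) (m n : ℕ) : ohC x m n = ohC x n m := by
  simp [ohC, add_comm, mul_comm]

theorem ohC_zero {x : ℝ} (hx : x < 1) (m : ℕ) : ohC x m 0 = 1 := by
  have := (ohG_pos hx m).ne'
  have h0 : ohG x 0 = 1 := by simp [ohG]
  simp [ohC, h0, this]

theorem ohC_pos {x : ℝ} (hx : x < 1) (m n : ℕ) : 0 < ohC x m n :=
  div_pos (mul_pos (ohG_pos hx m) (ohG_pos hx n)) (ohG_pos hx _)

theorem ohC_step {x : ℝ} (hx : x < 1) (m n : ℕ) :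
    ohC x m n - ohC x (m + 1) n = n * (ohC x (m + 1) n / ((m : ℝ) + 1 - x)) := by
  have h1 := (ohG_pos hx m).ne'
  have h2 := (ohG_pos hx n).ne'
  have h3 := (ohG_pos hx (m + n)).ne'
  have h4 : (m : ℝ) + 1 - x ≠ 0 := by
    have : (0 : ℝ) ≤ m := Nat.cast_nonneg m
    linarith
  have h5 : ((m + n : ℕ) : ℝ) + 1 - x ≠ 0 := by
    have : (0 : ℝ) ≤ (m + n : ℕ) := Nat.cast_nonneg _
    linarith
  have e : m + 1 + n = (m + n) + 1 := by ring
  unfold ohC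
  rw [e, ohG_succ, ohG_succ]
  field_simp
  push_cast
  ring

theorem ohC_le {x : ℝ} (h0 : 0 ≤ x) (hx : x < 1) (m n : ℕ) :
    ohC x m (n + 1) ≤ 1 / ((m : ℝ) + 1 - x) := by
  have hm : (0 : ℝ) ≤ m := Nat.cast_nonneg m
  induction n with
  | zero =>
    have h1 := (ohG_pos hx m).ne'
    have h4 : 0 < (m : ℝ) + 1 - x := by linarith
    have e : ohC x m (0 + 1) = (1 - x) / ((m : ℝ) + 1 - x) := by
      unfold ohC
      have h0 : ohG x 0 = 1 := by simp [ohG]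
      simp only [ohG_succ, h0]
      field_simp
      simp
    rw [e]
    gcongr
    linarith
  | succ n ih =>
    have := ohC_step hx (n + 1) m
    rw [ohC_comm x (n+1), ohC_comm x (n+1+1)] at this
    have h5 : (0 : ℝ) < ((n + 1 : ℕ) : ℝ) + 1 - x := by
      have : (0 : ℝ) ≤ (n + 1 : ℕ) := Nat.cast_nonneg _
      linarith
    have := mul_nonneg hm (div_pos (ohC_pos hx m (n + 1 + 1)) h5).le
    linarith

theorem ohC_hasSum {x : ℝ} (h0 : 0 ≤ x) (hx : x < 1) (m n : ℕ) (hn : 0 < n) :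
    HasSum (fun k : ℕ => ohC x (m + k + 1) n / (((m + k : ℕ) : ℝ) + 1 - x)) (ohC x m n / n) := by
  have hpos : ∀ k : ℕ, (0 : ℝ) < (k : ℝ) + 1 - x := fun k => by
    have : (0 : ℝ) ≤ k := Nat.cast_nonneg k
    linarith
  rw [hasSum_iff_tendsto_nat_of_nonneg (fun k => (div_pos (ohC_pos hx _ _) (hpos _)).le)]
  have hn' : (0 : ℝ) < n := by exact_mod_cast hn
  have hs : ∀ K : ℕ, ∑ k ∈ range K, ohC x (m + k + 1) n / (((m + k : ℕ) : ℝ) + 1 - x)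
      = (ohC x m n - ohC x (m + K) n) / n := by
    intro K
    have := Finset.sum_range_sub' (fun k => ohC x (m + k) n / n) K
    rw [add_zero, ← sub_div] at this
    rw [← this]
    apply Finset.sum_congr rfl
    intro k _
    have := ohC_step hx (m + k) n
    rw [← sub_div, ← add_assoc, this]
    field_simp
  simp_rw [hs]
  have ht : Filter.Tendsto (fun K => ohC x (m + K) n) Filter.atTop (nhds 0) := by
    obtain ⟨n, rfl⟩ : ∃ n', n = n' + 1 := ⟨n - 1, by omega⟩
    have hc : Filter.Tendsto (fun K : ℕ => 1 / (K : ℝ)) Filter.atTop (nhds 0) :=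
      tendsto_one_div_atTop_nhds_zero_nat
    refine tendsto_of_tendsto_of_tendsto_of_le_of_le' tendsto_const_nhds hc
      (Filter.Eventually.of_forall fun K => (ohC_pos hx _ _).le) ?_
    filter_upwards [Filter.eventually_gt_atTop 0] with K hK
    refine (ohC_le h0 hx (m + K) n).trans ?_
    have : (0 : ℝ) < K := by exact_mod_cast hK
    gcongr
    push_cast
    have : (0 : ℝ) ≤ m := Nat.cast_nonneg m
    linarith
  have := (ht.const_sub (ohC x m n)).div_const (n : ℝ)
  simpa using this

open scoped ENNReal

/-- weights -/
noncomputable def ohW (x : ℝ) (k a : ℕ) : ℝ≥0∞ := ENNReal.ofReal (1 / (((a : ℝ) - x) * (a : ℝ) ^ k))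

/-- nested sum operator -/
noncomputable def ohT (w : ℕ → ℝ≥0∞) (f : ℕ → ℝ≥0∞) (m : ℕ) : ℝ≥0∞ :=
  ∑' a : ℕ, if m < a then w a * f a else 0

/-- nested sums -/
noncomputable def ohL : List (ℕ → ℝ≥0∞) → ℕ → ℝ≥0∞
  | [] => fun _ => 1
  | w :: ws => ohT w (ohL ws)

/-- connected sum -/
noncomputable def ohF (x : ℝ) (w : ℕ → ℝ≥0∞) (m : ℕ) : ℝ≥0∞ :=
  ∑' b : ℕ, w b * ENNReal.ofReal (ohC x m b)

theorem ohW_succ {x : ℝ} (k a : ℕ) :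
    ohW x (k + 1) a = ohW x k a * ENNReal.ofReal (1 / a) := by
  unfold ohW
  rw [← ENNReal.ofReal_mul' (by positivity)]
  congr 1
  rw [pow_succ]
  simp only [one_div, mul_inv]
  ring

theorem ohW_pow {x : ℝ} (k a : ℕ) :
    ohW x k a = ohW x 0 a * ENNReal.ofReal (1 / a) ^ k := by
  induction k with
  | zero => simp
  | succ k ih => rw [ohW_succ, ih, pow_succ, mul_assoc]

theorem ohT_shift (f : ℕ → ℝ≥0∞) (m : ℕ) :
    (∑' a : ℕ, if m < a then f a else 0) = ∑' k : ℕ, f (m + k + 1) := by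
  have hi : Function.Injective (fun k : ℕ => m + k + 1) := fun a b h => by
    simp at h; exact h
  have := hi.tsum_eq (f := fun a => if m < a then f a else 0) (by
    intro a ha
    have : m < a := by
      by_contra hc
      simp [hc] at ha
    exact ⟨a - m - 1, by simp; omega⟩)
  rw [← this]
  apply tsum_congr
  intro k
  rw [if_pos (by omega)]

theorem ohC_tsum {x : ℝ} (h0 : 0 ≤ x) (hx : x < 1) (m n : ℕ) (hn : 0 < n) :
    ohT (ohW x 0) (fun a => ENNReal.ofReal (ohC x a n)) m
      = ENNReal.ofReal (1 / n) * ENNReal.ofReal (ohC x m n) := by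
  unfold ohT
  rw [ohT_shift (fun a => ohW x 0 a * ENNReal.ofReal (ohC x a n))]
  have hs := ohC_hasSum h0 hx m n hn
  rw [← ENNReal.ofReal_mul (by positivity)]
  have e : 1 / (n : ℝ) * ohC x m n = ohC x m n / n := by ring
  rw [e, ← hs.tsum_eq, ENNReal.ofReal_tsum_of_nonneg _ hs.summable]
  · apply tsum_congr
    intro k
    unfold ohW
    rw [← ENNReal.ofReal_mul' (ohC_pos hx _ _).le]
    congr 1
    push_cast
    simp only [pow_zero, mul_one]
    ring
  · intro k
    refine (div_pos (ohC_pos hx _ _) ?_).le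
    have : (0 : ℝ) ≤ (m + k : ℕ) := Nat.cast_nonneg _
    linarith

theorem ohT_zero_F {x : ℝ} (h0 : 0 ≤ x) (hx : x < 1) (w : ℕ → ℝ≥0∞) (hw : w 0 = 0) :
    ohT (ohW x 0) (ohF x w) = ohF x (fun b => w b * ENNReal.ofReal (1 / b)) := by
  funext m
  have : ohT (ohW x 0) (ohF x w) m =
      ∑' b, w b * ohT (ohW x 0) (fun a => ENNReal.ofReal (ohC x a b)) m := by
    unfold ohT ohF
    simp_rw [← ENNReal.tsum_mul_left]
    rw [ENNReal.tsum_comm]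
    apply tsum_congr
    intro a
    split_ifs
    · exact tsum_congr fun b => by ring
    · simp
  rw [this]
  unfold ohF
  apply tsum_congr
  intro b
  rcases Nat.eq_zero_or_pos b with rfl | hb
  · simp [hw]
  · rw [ohC_tsum h0 hx m b hb, mul_assoc]

theorem ohT_congr (w v f g : ℕ → ℝ≥0∞) (h : ∀ a, 0 < a → w a * f a = v a * g a) :
    ohT w f = ohT v g := by
  funext m
  unfold ohT
  apply tsum_congr
  intro a
  split_ifs with hm
  · exact h a (by omega)
  · rfl

theorem ohT_one_F {x : ℝ} (h0 : 0 ≤ x) (hx : x < 1) (w : ℕ → ℝ≥0∞) :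
    ohT (ohW x 1) (ohF x w) =
      ohF x (fun c => (ohW x 0 c * ∑' b, if b < c then w b else 0) * ENNReal.ofReal (1 / c)) := by
  rw [← ohT_zero_F h0 hx _ (by simp)]
  apply ohT_congr
  intro a ha
  rw [ohW_succ, mul_assoc]
  congr 1
  unfold ohF
  simp_rw [← ENNReal.tsum_mul_left, ← ENNReal.tsum_mul_right]
  rw [ENNReal.tsum_comm]
  apply tsum_congr
  intro b
  have := ohC_tsum h0 hx b a ha
  rw [ohC_comm] at this
  rw [mul_left_comm, ← this]
  unfold ohT
  rw [← ENNReal.tsum_mul_left]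
  apply tsum_congr
  intro c
  rw [ohC_comm]
  split_ifs
  · ring
  · simp

theorem ohL_replicate {x : ℝ} (h0 : 0 ≤ x) (hx : x < 1) (ws : List (ℕ → ℝ≥0∞)) (w : ℕ → ℝ≥0∞)
    (h : ohL ws = ohF x w) (a : ℕ) :
    ohL (List.replicate a (ohW x 0) ++ [ohW x 1] ++ ws) =
      ohF x (fun c => ohW x (a + 1) c * ∑' b, if b < c then w b else 0) := by
  induction a with
  | zero =>
    simp only [List.replicate_zero, List.nil_append, List.singleton_append, ohL, h]
    rw [ohT_one_F h0 hx]
    congr 1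
    funext c
    rw [ohW_succ]
    ring
  | succ a ih =>
    simp only [List.replicate_succ, List.cons_append]
    rw [ohL, ih, ohT_zero_F h0 hx _ (by simp)]
    congr 1
    funext c
    rw [ohW_succ (a + 1)]
    ring

theorem oh_key {x : ℝ} (h0 : 0 ≤ x) (hx : x < 1) (a₁ a₂ : ℕ) :
    ohL ((List.replicate a₁ (ohW x 0) ++ [ohW x 1]) ++ (List.replicate a₂ (ohW x 0) ++ [ohW x 1])) 0
      = ohL [ohW x (a₂ + 1), ohW x (a₁ + 1)] 0 := by
  have hnil : ohL [] = ohF x (fun b => if b = 0 then 1 else 0) := by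
    funext m
    unfold ohF
    rw [tsum_eq_single 0]
    · simp [ohL, ohC_zero hx]
    · intro b hb
      simp [hb]
  have h1 := ohL_replicate h0 hx [] _ hnil a₂
  rw [List.append_nil] at h1
  rw [ohL_replicate h0 hx _ _ h1 a₁]
  simp only [ohF, ohL, ohT]
  simp_rw [ohC_comm x 0, ohC_zero hx]
  simp only [ENNReal.ofReal_one, mul_one]
  simp_rw [← ENNReal.tsum_mul_left]
  rw [ENNReal.tsum_comm]
  apply tsum_congr
  intro b
  have : (∑' b_1, if b_1 < b then (if b_1 = 0 then (1 : ℝ≥0∞) else 0) else 0) = if 0 < b then 1 else 0 := by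
    rw [tsum_eq_single 0]
    · simp
    · intro b hb
      simp [hb]
  simp_rw [ENNReal.tsum_mul_left, this]
  split_ifs
  · rw [← ENNReal.tsum_mul_left]
    apply tsum_congr
    intro c
    split_ifs
    · ring
    · simp
  · simp

theorem oh_fin (a₁ a₂ : ℕ) : ohL [ohW (1/2) (a₂ + 1), ohW (1/2) (a₁ + 1)] 0 ≠ ⊤ := by
  have hb : ∀ a k : ℕ, 0 < a → ohW (1/2) (k + 1) a ≤ ENNReal.ofReal (2 * (1 / (a : ℝ) ^ 2)) := by
    intro a k ha
    unfold ohW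
    apply ENNReal.ofReal_le_ofReal
    have h1 : (1 : ℝ) ≤ a := by exact_mod_cast ha
    have h2 : (a : ℝ) ≤ a ^ (k + 1) := le_self_pow₀ h1 (by omega)
    have : (a : ℝ) ^ 2 / 2 ≤ (a - 1 / 2) * a ^ (k + 1) := by nlinarith
    calc 1 / (((a : ℝ) - 1 / 2) * a ^ (k + 1)) ≤ 1 / ((a : ℝ) ^ 2 / 2) := by gcongr
      _ = _ := by field_simp
  have hK : ∑' a : ℕ, ENNReal.ofReal (2 * (1 / (a : ℝ) ^ 2)) ≠ ⊤ := by
    have : Summable (fun a : ℕ => 2 * (1 / (a : ℝ) ^ 2)) :=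
      (Real.summable_one_div_nat_pow.2 (by norm_num)).mul_left 2
    exact this.tsum_ofReal_ne_top
  set K := ∑' a : ℕ, ENNReal.ofReal (2 * (1 / (a : ℝ) ^ 2)) with hKdef
  have h1 : ∀ (k m : ℕ) (f : ℕ → ℝ≥0∞) (B : ℝ≥0∞), (∀ a, f a ≤ B) → ohT (ohW (1/2) (k + 1)) f m ≤ K * B := by
    intro k m f B hf
    unfold ohT
    rw [hKdef, ← ENNReal.tsum_mul_right]
    apply ENNReal.tsum_le_tsum
    intro a
    split_ifs with h
    · exact mul_le_mul' (hb a k (by omega)) (hf a)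
    · exact zero_le
  have := h1 a₂ 0 _ _ (fun a => h1 a₁ a (ohL []) 1 (fun _ => le_rfl))
  refine ne_top_of_le_ne_top ?_ this
  rw [mul_one]
  exact ENNReal.mul_ne_top hK hK

theorem oh_subtype {T : Type*} (p : T → Prop) [DecidablePred p] (f : T → ℝ≥0∞) :
    (∑' t, if p t then f t else 0) = ∑' t : {t // p t}, f t.1 := by
  have h := tsum_subtype {t | p t} f
  refine Eq.trans (tsum_congr fun t => ?_) h.symm
  by_cases hp : p t
  · rw [if_pos hp, Set.indicator_of_mem (by exact hp)]
  · rw [if_neg hp, Set.indicator_of_notMem (by exact hp)]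

theorem oh_tsum_prod {α β : Type*} (f : α × β → ℝ≥0∞) :
    ∑' p, f p = ∑' a, ∑' b, f (a, b) :=
  ENNReal.tsum_prod (f := fun a b => f (a, b))

theorem oh_split (y : ℝ≥0∞) (N : ℕ) (F : ℕ → ℝ≥0∞) : ∑' n, y ^ n * F n =
    ∑ n ∈ range N, y ^ n * F n + (y ^ N * (F N + y * ∑' n, y ^ n * F (n + (N + 1)))) := by
  have h := Summable.sum_add_tsum_nat_add' (f := fun n => y ^ n * F n) (k := N + 1) ENNReal.summable
  rw [← h, Finset.sum_range_succ, add_assoc, mul_add,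
    ← mul_assoc, ← ENNReal.tsum_mul_left]
  congr 2
  apply tsum_congr
  intro n
  rw [← pow_succ, pow_add, mul_comm (y ^ n), mul_assoc]

/-- MZV with values in extended nonnegative reals -/
noncomputable def ohZ {n : ℕ} (α : Fin n → ℕ) : ℝ≥0∞ :=
  ∑' ℓ : {ℓ : Fin n → ℕ // StrictMono ℓ ∧ ∀ i, 0 < ℓ i},
    ∏ i, ENNReal.ofReal (((ℓ.1 i : ℝ) ^ (α i))⁻¹)

theorem mzv_eq_ohZ {n : ℕ} (α : Fin n → ℕ) : mzv α = (ohZ α).toReal := by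
  unfold mzv ohZ
  rw [ENNReal.tsum_toReal_eq]
  · apply tsum_congr
    intro l
    rw [ENNReal.toReal_prod]
    apply Finset.prod_congr rfl
    intro i _
    rw [ENNReal.toReal_ofReal (by positivity)]
  · intro l
    exact ENNReal.prod_ne_top fun i _ => ENNReal.ofReal_ne_top

open Classical in
/-- nested sums over functions -/
noncomputable def ohN {n : ℕ} (w : Fin n → ℕ → ℝ≥0∞) (m : ℕ) : ℝ≥0∞ :=
  ∑' l : Fin n → ℕ, if StrictMono l ∧ ∀ i, m < l i then ∏ i, w i (l i) else 0

theorem oh_cons_iff {n : ℕ} (a m : ℕ) (l : Fin n → ℕ) :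
    (StrictMono (Fin.cons a l : Fin (n + 1) → ℕ) ∧ ∀ i, m < (Fin.cons a l : Fin (n + 1) → ℕ) i) ↔
      m < a ∧ StrictMono l ∧ ∀ i, a < l i := by
  constructor
  · rintro ⟨h1, h2⟩
    refine ⟨by simpa using h2 0, ?_, ?_⟩
    · intro i j hij
      simpa using h1 (Fin.succ_lt_succ_iff.2 hij)
    · intro i
      simpa using h1 (Fin.succ_pos i)
  · rintro ⟨h1, h2, h3⟩
    constructor
    · intro i j
      refine Fin.cases ?_ (fun i => ?_) i <;> refine Fin.cases ?_ (fun j => ?_) j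
      · simp
      · intro _; simpa using h3 j
      · intro h; simp at h
      · intro h; simpa using h2 (Fin.succ_lt_succ_iff.1 h)
    · intro i
      refine Fin.cases ?_ (fun i => ?_) i
      · simpa using h1
      · simpa using h1.trans (h3 i)

theorem ohN_eq {n : ℕ} (w : Fin n → ℕ → ℝ≥0∞) (m : ℕ) : ohN w m = ohL (List.ofFn w) m := by
  induction n generalizing m with
  | zero =>
    unfold ohN
    rw [tsum_eq_single (fun i => i.elim0)]
    · rw [if_pos ⟨fun i => i.elim0, fun i => i.elim0⟩]
      simp [ohL]
    · intro b hb
      exact absurd (Subsingleton.elim _ _) hb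
  | succ n ih =>
    rw [List.ofFn_succ, ohL]
    unfold ohT
    simp_rw [← ih]
    unfold ohN
    rw [← (Fin.consEquiv (fun _ : Fin (n + 1) => ℕ)).tsum_eq, oh_tsum_prod]
    apply tsum_congr
    intro a
    have hc : ∀ l : Fin n → ℕ,
        (StrictMono ((Fin.consEquiv (fun _ : Fin (n + 1) => ℕ)) (a, l)) ∧
          ∀ i, m < (Fin.consEquiv (fun _ : Fin (n + 1) => ℕ)) (a, l) i) ↔
        m < a ∧ StrictMono l ∧ ∀ i, a < l i := fun l => oh_cons_iff a m l
    by_cases hm : m < a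
    · rw [if_pos hm, ← ENNReal.tsum_mul_left]
      apply tsum_congr
      intro l
      by_cases hl : StrictMono l ∧ ∀ i, a < l i
      · rw [if_pos ((hc l).2 ⟨hm, hl⟩), if_pos hl]
        simp [Fin.prod_univ_succ, Fin.consEquiv_apply]
      · rw [if_neg (fun h => hl ((hc l).1 h).2), if_neg hl, mul_zero]
    · rw [if_neg hm]
      rw [ENNReal.tsum_eq_zero]
      intro l
      rw [if_neg (fun h => hm ((hc l).1 h).1)]

theorem oh_tsum_pi {n : ℕ} (f : Fin n → ℕ → ℝ≥0∞) :
    ∑' e : Fin n → ℕ, ∏ i, f i (e i) = ∏ i, ∑' k, f i k := by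
  induction n with
  | zero =>
    rw [tsum_eq_single (fun i => i.elim0)]
    · simp
    · intro b hb
      exact absurd (Subsingleton.elim _ _) hb
  | succ n ih =>
    rw [← (Fin.consEquiv (fun _ : Fin (n + 1) => ℕ)).tsum_eq, oh_tsum_prod,
      Fin.prod_univ_succ, ← ih, ← ENNReal.tsum_mul_right]
    apply tsum_congr
    intro a
    rw [← ENNReal.tsum_mul_left]
    apply tsum_congr
    intro l
    simp [Fin.consEquiv_apply, Fin.prod_univ_succ]

theorem oh_geom {x : ℝ} (h0 : 0 ≤ x) (hx : x < 1) (κ a : ℕ) (ha : 0 < a) :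
    ∑' k : ℕ, ENNReal.ofReal x ^ k * ENNReal.ofReal (((a : ℝ) ^ (κ + 1 + k))⁻¹) = ohW x κ a := by
  have ha' : (1 : ℝ) ≤ a := by exact_mod_cast ha
  have hr : x / a < 1 := by
    rw [div_lt_one (by linarith)]; linarith
  have hr0 : 0 ≤ x / a := by positivity
  have hs := (hasSum_geometric_of_lt_one hr0 hr).mul_left (((a : ℝ) ^ (κ + 1))⁻¹)
  have e : ((a : ℝ) ^ (κ + 1))⁻¹ * (1 - x / a)⁻¹ = 1 / (((a : ℝ) - x) * (a : ℝ) ^ κ) := by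
    have h1 : (a : ℝ) ≠ 0 := by linarith
    have h2 : (a : ℝ) - x ≠ 0 := by linarith
    have h3 : 1 - x / (a : ℝ) ≠ 0 := by linarith
    have h4 : 1 - x / (a : ℝ) = (a - x) / a := by field_simp
    rw [h4, pow_succ]
    field_simp
  unfold ohW
  rw [← e, ← hs.tsum_eq, ENNReal.ofReal_tsum_of_nonneg _ hs.summable]
  · apply tsum_congr
    intro k
    rw [← ENNReal.ofReal_pow h0, ← ENNReal.ofReal_mul (by positivity)]
    congr 1
    rw [pow_add, div_pow, mul_inv]
    ring
  · intro k
    positivity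

theorem oh_series {n : ℕ} {x : ℝ} (h0 : 0 ≤ x) (hx : x < 1) (κ : Fin n → ℕ) :
    ∑' e : Fin n → ℕ, ENNReal.ofReal x ^ (∑ i, e i) * ohZ (fun i => κ i + 1 + e i)
      = ohL (List.ofFn fun i => ohW x (κ i)) 0 := by
  classical
  rw [← ohN_eq]
  unfold ohZ ohN
  simp_rw [← ENNReal.tsum_mul_left]
  rw [ENNReal.tsum_comm]
  rw [oh_subtype (fun l : Fin n → ℕ => StrictMono l ∧ ∀ i, 0 < l i)]
  apply tsum_congr
  intro l
  have h1 : ∀ i, ohW x (κ i) (l.1 i) =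
      ∑' k : ℕ, ENNReal.ofReal x ^ k * ENNReal.ofReal (((l.1 i : ℝ) ^ (κ i + 1 + k))⁻¹) :=
    fun i => (oh_geom h0 hx (κ i) (l.1 i) (l.2.2 i)).symm
  simp_rw [h1]
  rw [← oh_tsum_pi]
  apply tsum_congr
  intro e
  rw [Finset.prod_mul_distrib, Finset.prod_pow_eq_pow_sum]

/-- coefficients -/
noncomputable def ohA {n : ℕ} (κ : Fin n → ℕ) (N : ℕ) : ℝ≥0∞ :=
  ∑' e : Fin n → ℕ, if ∑ i, e i = N then ohZ (fun i => κ i + 1 + e i) else 0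

theorem ohA_series {n : ℕ} {x : ℝ} (h0 : 0 ≤ x) (hx : x < 1) (κ : Fin n → ℕ) :
    ∑' N, ENNReal.ofReal x ^ N * ohA κ N = ohL (List.ofFn fun i => ohW x (κ i)) 0 := by
  rw [← oh_series h0 hx]
  unfold ohA
  simp_rw [← ENNReal.tsum_mul_left]
  rw [ENNReal.tsum_comm]
  apply tsum_congr
  intro e
  rw [tsum_eq_single (∑ i, e i)]
  · simp
  · intro b hb
    rw [if_neg hb.symm, mul_zero]

theorem oh_coeff_le (A B : ℕ → ℝ≥0∞) (N : ℕ)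
    (h : ∀ x : ℝ, 0 < x → x ≤ 1/2 → ∑' n, ENNReal.ofReal x ^ n * A n = ∑' n, ENNReal.ofReal x ^ n * B n)
    (hf : ∑' n, ENNReal.ofReal (1/2) ^ n * B n ≠ ⊤) (hlt : ∀ j < N, A j = B j) : A N ≤ B N := by
  have hp0 : ENNReal.ofReal (1/2) ≠ 0 := by simp
  have hBfin : ∀ n, B n ≠ ⊤ := by
    intro n hn
    have := ENNReal.ne_top_of_tsum_ne_top hf n
    rw [hn, ENNReal.mul_top (pow_ne_zero _ hp0)] at this
    exact this rfl
  set K := ∑' n, ENNReal.ofReal (1/2) ^ n * B (n + (N + 1)) with hK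
  have hKfin : K ≠ ⊤ := by
    have h1 : ENNReal.ofReal (1/2) ^ (N + 1) * K ≤ ∑' n, ENNReal.ofReal (1/2) ^ n * B n := by
      rw [hK, ← ENNReal.tsum_mul_left]
      have := ENNReal.tsum_comp_le_tsum_of_injective (add_left_injective (N + 1))
        (fun n => ENNReal.ofReal (1/2) ^ n * B n)
      refine le_trans (le_of_eq ?_) this
      apply tsum_congr
      intro n
      simp only [pow_add]
      ring
    intro hc
    rw [hc, ENNReal.mul_top (pow_ne_zero _ hp0)] at h1
    exact hf (top_le_iff.1 h1)
  have key : ∀ x : ℝ, 0 < x → x ≤ 1/2 → A N ≤ B N + ENNReal.ofReal x * K := by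
    intro x hx0 hx
    have hx' : ENNReal.ofReal x ≠ 0 := by simpa using hx0
    have h1 := h x hx0 hx
    rw [oh_split _ N A, oh_split _ N B, Finset.sum_congr rfl (fun j hj => by rw [hlt j (Finset.mem_range.1 hj)])] at h1
    have hfs : ∑ n ∈ range N, ENNReal.ofReal x ^ n * B n ≠ ⊤ :=
      ENNReal.sum_ne_top.2 fun n _ => ENNReal.mul_ne_top (ENNReal.pow_ne_top ENNReal.ofReal_ne_top) (hBfin n)
    rw [ENNReal.add_right_inj hfs, ENNReal.mul_right_inj (pow_ne_zero _ hx')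
      (ENNReal.pow_ne_top ENNReal.ofReal_ne_top)] at h1
    calc A N ≤ _ := le_self_add
      _ = _ := h1
      _ ≤ _ := by
        rw [hK]
        gcongr
  have ht : Filter.Tendsto (fun x : ℝ => B N + ENNReal.ofReal x * K) (nhdsWithin 0 (Set.Ioi 0))
      (nhds (B N + 0 * K)) := by
    refine Filter.Tendsto.const_add _ (ENNReal.Tendsto.mul_const ?_ (Or.inr hKfin))
    have : Filter.Tendsto ENNReal.ofReal (nhds 0) (nhds (ENNReal.ofReal 0)) :=
      ENNReal.continuous_ofReal.tendsto 0
    rw [ENNReal.ofReal_zero] at this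
    exact this.mono_left nhdsWithin_le_nhds
  rw [zero_mul, add_zero] at ht
  refine ge_of_tendsto ht ?_
  filter_upwards [Ioc_mem_nhdsGT (show (0 : ℝ) < 1/2 by norm_num)] with x hx
  exact key x hx.1 hx.2

theorem oh_coeff_eq (A B : ℕ → ℝ≥0∞)
    (h : ∀ x : ℝ, 0 < x → x ≤ 1/2 → ∑' n, ENNReal.ofReal x ^ n * A n = ∑' n, ENNReal.ofReal x ^ n * B n)
    (hf : ∑' n, ENNReal.ofReal (1/2) ^ n * B n ≠ ⊤) (N : ℕ) : A N = B N := by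
  induction N using Nat.strong_induction_on with
  | _ N ih =>
    apply le_antisymm
    · exact oh_coeff_le A B N h hf ih
    · refine oh_coeff_le B A N (fun x h0 h1 => (h x h0 h1).symm) ?_ (fun j hj => (ih j hj).symm)
      rwa [h (1/2) (by norm_num) le_rfl]

theorem oh_coeff_ne_top (B : ℕ → ℝ≥0∞)
    (hf : ∑' n, ENNReal.ofReal (1/2) ^ n * B n ≠ ⊤) (n : ℕ) : B n ≠ ⊤ := by
  have hp0 : ENNReal.ofReal (1/2) ≠ 0 := by simp
  intro hn
  have := ENNReal.ne_top_of_tsum_ne_top hf n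
  rw [hn, ENNReal.mul_top (pow_ne_zero _ hp0)] at this
  exact this rfl

/-- base exponents of one block -/
def ohK (a : ℕ) : Fin (a + 1) → ℕ := incLast (fun _ => 0)

theorem oh_ofFn_K (x : ℝ) (a : ℕ) :
    List.ofFn (fun i => ohW x (ohK a i)) = List.replicate a (ohW x 0) ++ [ohW x 1] := by
  rw [List.ofFn_succ']
  simp only [ohK, incLast, List.concat_eq_append]
  congr 1
  · apply List.ext_getElem
    · simp
    · intro i h1 h2
      have : i < a := by simpa using h1
      simp [this.ne]
  · simp

theorem oh_main (a₁ a₂ N : ℕ) :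
    ohA (Fin.append (ohK a₁) (ohK a₂)) N = ohA ![a₂ + 1, a₁ + 1] N ∧
      ohA ![a₂ + 1, a₁ + 1] N ≠ ⊤ := by
  have hR : ∀ x : ℝ, 0 ≤ x → x < 1 → ∑' N, ENNReal.ofReal x ^ N * ohA ![a₂ + 1, a₁ + 1] N
      = ohL [ohW x (a₂ + 1), ohW x (a₁ + 1)] 0 := by
    intro x h0 hx
    rw [ohA_series h0 hx]
    simp [List.ofFn_succ]
  have hL : ∀ x : ℝ, 0 ≤ x → x < 1 →
      ∑' N, ENNReal.ofReal x ^ N * ohA (Fin.append (ohK a₁) (ohK a₂)) N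
      = ohL [ohW x (a₂ + 1), ohW x (a₁ + 1)] 0 := by
    intro x h0 hx
    rw [ohA_series h0 hx, ← oh_key h0 hx, ← oh_ofFn_K, ← oh_ofFn_K, ← List.ofFn_fin_append]
    congr 2
    funext i
    refine Fin.addCases (fun i => ?_) (fun i => ?_) i <;> simp
  have hf : ∑' N, ENNReal.ofReal (1/2) ^ N * ohA ![a₂ + 1, a₁ + 1] N ≠ ⊤ := by
    rw [hR _ (by norm_num) (by norm_num)]
    exact oh_fin a₁ a₂
  refine ⟨oh_coeff_eq _ _ (fun x h0 hx => ?_) hf N, oh_coeff_ne_top _ hf N⟩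
  rw [hL x h0.le (by linarith), hR x h0.le (by linarith)]

theorem oh_comp (a b : ℕ) (f : (Fin (a + 1) → ℕ) → ℝ≥0∞) :
    ∑' α : Comp (a + 1) (a + b + 1), f α.1 =
      ∑' u : Fin (a + 1) → ℕ, if ∑ i, u i = b then f (fun i => 1 + u i) else 0 := by
  let φ : (Fin (a + 1) → ℕ) → (Fin (a + 1) → ℕ) := fun u i => 1 + u i
  have hφ : Function.Injective φ := by
    intro u v h
    funext i
    have := congrFun h i
    simp only [φ] at this
    omega
  have h1 : ∑' α : Comp (a + 1) (a + b + 1), f α.1 =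
      ∑' v : Fin (a + 1) → ℕ, if (∀ i, 0 < v i) ∧ ∑ i, v i = a + b + 1 then f v else 0 := by
    rw [oh_subtype (fun v : Fin (a + 1) → ℕ => (∀ i, 0 < v i) ∧ ∑ i, v i = a + b + 1)]
    rfl
  rw [h1, ← hφ.tsum_eq]
  · apply tsum_congr
    intro u
    have : ((∀ i, 0 < φ u i) ∧ ∑ i, φ u i = a + b + 1) ↔ ∑ i, u i = b := by
      simp only [φ, Finset.sum_add_distrib]
      simp
      omega
    simp only [this]
    rfl
  · intro v hv
    have hv' : (∀ i, 0 < v i) := by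
      by_contra hc
      simp [hc] at hv
    refine ⟨fun i => v i - 1, ?_⟩
    funext i
    have := hv' i
    simp only [φ]
    omega

theorem oh_incLast (a : ℕ) (u : Fin (a + 1) → ℕ) :
    incLast (fun i => 1 + u i) = fun i => ohK a i + 1 + u i := by
  funext i
  simp only [ohK, incLast]
  split_ifs <;> omega

theorem oh_left (a₁ a₂ N : ℕ) :
    ∑ b ∈ antidiagonal N,
      ∑' (α : Comp (a₁ + 1) (a₁ + b.1 + 1)) (β : Comp (a₂ + 1) (a₂ + b.2 + 1)),
        ohZ (Fin.append (incLast α.1) (incLast β.1)) = ohA (Fin.append (ohK a₁) (ohK a₂)) N := by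
  have h1 : ∀ b : ℕ × ℕ, ∑' (α : Comp (a₁ + 1) (a₁ + b.1 + 1)) (β : Comp (a₂ + 1) (a₂ + b.2 + 1)),
        ohZ (Fin.append (incLast α.1) (incLast β.1)) =
      ∑' (u : Fin (a₁ + 1) → ℕ) (v : Fin (a₂ + 1) → ℕ),
        if (∑ i, u i, ∑ i, v i) = b then
          ohZ (fun i => Fin.append (ohK a₁) (ohK a₂) i + 1 + Fin.append u v i) else 0 := by
    intro b
    rw [oh_comp a₁ b.1 (fun α => ∑' (β : Comp (a₂ + 1) (a₂ + b.2 + 1)),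
        ohZ (Fin.append (incLast α) (incLast β.1)))]
    apply tsum_congr
    intro u
    rw [oh_comp a₂ b.2 (fun β => ohZ (Fin.append (incLast fun i => 1 + u i) (incLast β)))]
    by_cases hu : ∑ i, u i = b.1
    · rw [if_pos hu]
      apply tsum_congr
      intro v
      simp only [Prod.ext_iff, hu, true_and]
      congr 2
      rw [oh_incLast, oh_incLast]
      funext i
      refine Fin.addCases (fun i => ?_) (fun i => ?_) i <;> simp
    · simp [hu, Prod.ext_iff]
  rw [Finset.sum_congr rfl (fun b _ => h1 b)]
  unfold ohA
  rw [← (Fin.appendEquiv (a₁ + 1) (a₂ + 1)).tsum_eq, oh_tsum_prod]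
  rw [← Summable.tsum_finsetSum (fun _ _ => ENNReal.summable)]
  apply tsum_congr
  intro u
  rw [← Summable.tsum_finsetSum (fun _ _ => ENNReal.summable)]
  apply tsum_congr
  intro v
  rw [Finset.sum_ite_eq]
  simp [Fin.appendEquiv, Fin.sum_univ_add]

theorem oh_right (a₁ a₂ N : ℕ) :
    ∑ b ∈ antidiagonal N, ohZ ![a₂ + b.2 + 2, a₁ + b.1 + 2] = ohA ![a₂ + 1, a₁ + 1] N := by
  unfold ohA
  rw [← (finTwoArrowEquiv ℕ).symm.tsum_eq, ← (Equiv.prodComm ℕ ℕ).tsum_eq]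
  have : ∀ b : ℕ × ℕ, (if ∑ i, (finTwoArrowEquiv ℕ).symm ((Equiv.prodComm ℕ ℕ) b) i = N then
      ohZ (fun i => ![a₂ + 1, a₁ + 1] i + 1 + (finTwoArrowEquiv ℕ).symm ((Equiv.prodComm ℕ ℕ) b) i)
        else 0) = if b ∈ antidiagonal N then ohZ ![a₂ + b.2 + 2, a₁ + b.1 + 2] else 0 := by
    intro b
    have e : (fun i => ![a₂ + 1, a₁ + 1] i + 1 +
        (finTwoArrowEquiv ℕ).symm ((Equiv.prodComm ℕ ℕ) b) i) = ![a₂ + b.2 + 2, a₁ + b.1 + 2] := by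
      funext i
      fin_cases i <;> simp <;> omega
    rw [e]
    simp [Fin.sum_univ_two, add_comm]
  simp_rw [this]
  rw [tsum_eq_sum (s := antidiagonal N)]
  · exact Finset.sum_congr rfl fun b hb => by rw [if_pos hb]
  · intro b hb
    rw [if_neg hb]

theorem ohno_special_case (a₁ a₂ ℓ : ℕ) :
    (∑ b ∈ antidiagonal ℓ,
      ∑' (α : Comp (a₁ + 1) (a₁ + b.1 + 1)) (β : Comp (a₂ + 1) (a₂ + b.2 + 1)),
        mzv (Fin.append (incLast α.1) (incLast β.1))) =
    ∑ b ∈ antidiagonal ℓ, mzv ![a₂ + b.2 + 2, a₁ + b.1 + 2] := by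
  obtain ⟨heq, hfin⟩ := oh_main a₁ a₂ ℓ
  have hR := oh_right a₁ a₂ ℓ
  have hL := oh_left a₁ a₂ ℓ
  rw [← heq, ← hL] at hfin
  rw [← hL, ← hR] at heq
  have hfR := hfin
  rw [heq] at hfR
  rw [ENNReal.sum_ne_top] at hfR hfin
  simp_rw [mzv_eq_ohZ]
  rw [← ENNReal.toReal_sum hfR, ← heq, ENNReal.toReal_sum hfin]
  apply Finset.sum_congr rfl
  intro b hb
  have h1 := fun α => ENNReal.ne_top_of_tsum_ne_top (hfin b hb) α
  rw [ENNReal.tsum_toReal_eq h1]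
  apply tsum_congr
  intro α
  rw [ENNReal.tsum_toReal_eq (fun β => ENNReal.ne_top_of_tsum_ne_top (h1 α) β)]
end

section
/- First evaluation of the two-variable log integral: for nonnegative integers k, ℓ and real parameters μ_1, μ_2, ξ_1, ξ_2, the integral I_{k,ℓ}(μ_1,μ_2,ξ_1,ξ_2) := (1/(k!ℓ!)) ∫_{0<s_1<s_2<1, 0<t_1<t_2<1} (μ_1 log((1-s_1)/(1-s_2)) + μ_2 log((1-t_1)/(1-t_2)))^k (ξ_1 log(s_2/s_1) + ξ_2 log(t_2/t_1))^ℓ ds_1 ds_2 dt_1 dt_2 / ((1-s_1) s_2 (1-t_1) t_2) equals ∑_{a_1+a_2=k, b_1+b_2=ℓ} μ_1^{a_1} μ_2^{a_2} ξ_1^{b_1} ξ_2^{b_2} ζ(a_1+b_1+2) ζ(a_2+b_2+2). -/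
open MeasureTheory Real Finset

lemma mzv_single (m : ℕ) : mzv ![m] = ∑' n : ℕ, (((n : ℝ) + 1) ^ m)⁻¹ := by
  unfold mzv
  let e : ℕ ≃ {ℓ : Fin 1 → ℕ // StrictMono ℓ ∧ ∀ i, 0 < ℓ i} :=
    { toFun := fun n => ⟨fun _ => n + 1, Subsingleton.strictMono _, fun _ => Nat.succ_pos n⟩
      invFun := fun l => l.1 0 - 1
      left_inv := fun n => by simp
      right_inv := fun l => by
        apply Subtype.ext
        funext i
        have h := l.2.2 i
        have hi : i = 0 := Subsingleton.elim _ _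
        subst hi
        show l.1 0 - 1 + 1 = l.1 0
        omega }
  rw [← e.tsum_eq]
  refine tsum_congr fun n => ?_
  simp [e]

lemma summable_zeta (m : ℕ) : Summable (fun n : ℕ => (((n : ℝ) + 1) ^ (m + 2))⁻¹) := by
  have h := (summable_nat_add_iff 1).2 (Real.summable_nat_pow_inv.2 (show 1 < m + 2 by omega))
  simpa using h

lemma mzv_pos (m : ℕ) : 0 < mzv ![m + 2] := by
  rw [mzv_single]
  exact (summable_zeta m).tsum_pos (fun n => by positivity) 0 (by positivity)

lemma gamma_int (a n : ℕ) :
    ∫ u in Set.Ioi (0 : ℝ), u ^ a * Real.exp (-(((n : ℝ) + 1) * u)) =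
      (a.factorial : ℝ) * (((n : ℝ) + 1) ^ (a + 1))⁻¹ := by
  have h := Real.integral_rpow_mul_exp_neg_mul_Ioi (a := (a : ℝ) + 1) (r := (n : ℝ) + 1)
    (by positivity) (by positivity)
  simp only [add_sub_cancel_right, Real.rpow_natCast] at h
  rw [h, Real.Gamma_nat_eq_factorial, mul_comm]
  congr 1
  rw [show (a : ℝ) + 1 = ((a + 1 : ℕ) : ℝ) by push_cast; rfl, Real.rpow_natCast, one_div, inv_pow]

lemma gamma_integrable (a n : ℕ) :
    IntegrableOn (fun u : ℝ => u ^ a * Real.exp (-(((n : ℝ) + 1) * u))) (Set.Ioi (0 : ℝ)) := by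
  refine Integrable.of_integral_ne_zero ?_
  rw [gamma_int]
  positivity

/-- The Bose-type double integral over the open quadrant. -/
lemma bose_integral (a b : ℕ) :
    ∫ p in (Set.Ioi (0 : ℝ)) ×ˢ (Set.Ioi (0 : ℝ)),
      p.1 ^ a * p.2 ^ b * (Real.exp (p.1 + p.2) - 1)⁻¹ =
    (a.factorial : ℝ) * b.factorial * mzv ![a + b + 2] := by
  set F : ℕ → ℝ × ℝ → ℝ := fun n p =>
    (p.1 ^ a * Real.exp (-(((n : ℝ) + 1) * p.1))) * (p.2 ^ b * Real.exp (-(((n : ℝ) + 1) * p.2)))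
    with hF
  have hmeas : MeasurableSet ((Set.Ioi (0 : ℝ)) ×ˢ (Set.Ioi (0 : ℝ))) :=
    measurableSet_Ioi.prod measurableSet_Ioi
  have hint : ∀ n, ∫ p in (Set.Ioi (0 : ℝ)) ×ˢ (Set.Ioi (0 : ℝ)), F n p =
      (a.factorial : ℝ) * b.factorial * (((n : ℝ) + 1) ^ (a + b + 2))⁻¹ := by
    intro n
    rw [hF, Measure.volume_eq_prod]
    rw [setIntegral_prod_mul (fun u : ℝ => u ^ a * Real.exp (-(((n : ℝ) + 1) * u)))
      (fun u : ℝ => u ^ b * Real.exp (-(((n : ℝ) + 1) * u))), gamma_int, gamma_int]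
    rw [show a + b + 2 = (a + 1) + (b + 1) by ring, pow_add _ (a + 1) (b + 1), mul_inv]
    ring
  have hnorm : ∀ n, ∫ p in (Set.Ioi (0 : ℝ)) ×ˢ (Set.Ioi (0 : ℝ)), ‖F n p‖ =
      (a.factorial : ℝ) * b.factorial * (((n : ℝ) + 1) ^ (a + b + 2))⁻¹ := by
    intro n
    rw [← hint n]
    refine setIntegral_congr_fun hmeas fun p hp => ?_
    have h1 : 0 < p.1 := hp.1
    have h2 : 0 < p.2 := hp.2
    exact Real.norm_of_nonneg (by positivity)
  have hsum := hasSum_integral_of_summable_integral_norm (F := F)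
    (μ := volume.restrict ((Set.Ioi (0 : ℝ)) ×ˢ (Set.Ioi (0 : ℝ))))
    (fun n => Integrable.of_integral_ne_zero (by rw [hint n]; positivity))
    (by simp_rw [hnorm]; exact (summable_zeta (a + b)).mul_left _)
  simp_rw [hint] at hsum
  rw [mzv_single, ← tsum_mul_left, hsum.tsum_eq]
  refine setIntegral_congr_fun hmeas fun p hp => ?_
  have h1 : 0 < p.1 := hp.1
  have h2 : 0 < p.2 := hp.2
  have hlt : Real.exp (-(p.1 + p.2)) < 1 := by
    rw [Real.exp_lt_one_iff]; linarith
  have hg := (hasSum_geometric_of_lt_one (Real.exp_pos _).le hlt).mul_left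
    (p.1 ^ a * p.2 ^ b * Real.exp (-(p.1 + p.2)))
  have he : ∀ n : ℕ, F n p =
      p.1 ^ a * p.2 ^ b * Real.exp (-(p.1 + p.2)) * Real.exp (-(p.1 + p.2)) ^ n := by
    intro n
    have : Real.exp (-(((n : ℝ) + 1) * p.1)) * Real.exp (-(((n : ℝ) + 1) * p.2)) =
        Real.exp (-(p.1 + p.2)) * Real.exp (-(p.1 + p.2)) ^ n := by
      rw [← Real.exp_nat_mul, ← Real.exp_add, ← Real.exp_add]
      congr 1
      ring
    rw [mul_assoc _ (Real.exp _), ← this]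
    simp only [hF]
    ring
  simp only [he]
  rw [hg.tsum_eq, mul_assoc (p.1 ^ a * p.2 ^ b) (Real.exp _)]
  congr 1
  rw [Real.exp_neg]
  have h3 : 1 < Real.exp (p.1 + p.2) := by rw [Real.one_lt_exp_iff]; linarith
  have h4 : Real.exp (p.1 + p.2) - 1 ≠ 0 := by linarith
  have h5 : Real.exp (p.1 + p.2) ≠ 0 := by positivity
  have h6 : 1 - (Real.exp (p.1 + p.2))⁻¹ ≠ 0 := by
    have := inv_lt_one_of_one_lt₀ h3
    linarith
  field_simp

/-- The open triangle. -/
def Tri : Set (ℝ × ℝ) := {x | 0 < x.1 ∧ x.1 < x.2 ∧ x.2 < 1}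

lemma measurableSet_Tri : MeasurableSet Tri := by
  apply IsOpen.measurableSet
  apply IsOpen.inter (isOpen_lt continuous_const continuous_fst)
  exact IsOpen.inter (isOpen_lt continuous_fst continuous_snd)
    (isOpen_lt continuous_snd continuous_const)

/-- The change of variables. -/
noncomputable def cv (x : ℝ × ℝ) : ℝ × ℝ :=
  (Real.log ((1 - x.1) / (1 - x.2)), Real.log (x.2 / x.1))

/-- Its derivative. -/
noncomputable def cvd (x : ℝ × ℝ) : ℝ × ℝ →L[ℝ] ℝ × ℝ :=
  (Matrix.toLin (.finTwoProd ℝ) (.finTwoProd ℝ)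
    !![-(1 - x.1)⁻¹, (1 - x.2)⁻¹; -(x.1)⁻¹, (x.2)⁻¹]).toContinuousLinearMap

lemma cvd_det (x : ℝ × ℝ) :
    (cvd x).det = (1 - x.2)⁻¹ * (x.1)⁻¹ - (1 - x.1)⁻¹ * (x.2)⁻¹ := by
  unfold cvd
  simp only [LinearMap.det_toContinuousLinearMap, LinearMap.det_toLin, Matrix.det_fin_two_of]
  ring

lemma cv_hasFDerivAt {x : ℝ × ℝ} (hx : x ∈ Tri) : HasFDerivWithinAt cv (cvd x) Tri x := by
  obtain ⟨h0, h1, h2⟩ := hx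
  have e1 : (1 - x.1) ≠ 0 := by linarith
  have e2 : (1 - x.2) ≠ 0 := by linarith
  have e3 : x.1 ≠ 0 := by linarith
  have e4 : x.2 ≠ 0 := by linarith
  have key : HasFDerivAt (fun y : ℝ × ℝ =>
      (Real.log (1 - y.1) - Real.log (1 - y.2), Real.log y.2 - Real.log y.1)) (cvd x) x := by
    unfold cvd
    rw [Matrix.toLin_finTwoProd_toContinuousLinearMap]
    have d1 := ((hasFDerivAt_fst (𝕜 := ℝ) (p := x)).const_sub 1).log e1
    have d2 := ((hasFDerivAt_snd (𝕜 := ℝ) (p := x)).const_sub 1).log e2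
    have d3 := (hasFDerivAt_fst (𝕜 := ℝ) (p := x)).log e3
    have d4 := (hasFDerivAt_snd (𝕜 := ℝ) (p := x)).log e4
    convert! HasFDerivAt.prodMk (d1.sub d2) (d4.sub d3) using 2
    · ext <;> simp
    · ext <;> simp
  refine key.hasFDerivWithinAt.congr ?_ ?_
  · intro y hy
    obtain ⟨h0, h1, h2⟩ := hy
    simp only [cv]
    rw [Real.log_div (by linarith) (by linarith), Real.log_div (by linarith) (by linarith)]
  · simp only [cv]
    rw [Real.log_div e1 e2, Real.log_div e4 e3]

lemma cv_exp {x : ℝ × ℝ} (hx : x ∈ Tri) :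
    Real.exp (cv x).1 = (1 - x.1) / (1 - x.2) ∧ Real.exp (cv x).2 = x.2 / x.1 := by
  obtain ⟨h0, h1, h2⟩ := hx
  constructor
  · exact Real.exp_log (div_pos (by linarith) (by linarith))
  · exact Real.exp_log (div_pos (by linarith) (by linarith))

lemma cv_pos {x : ℝ × ℝ} (hx : x ∈ Tri) : 0 < (cv x).1 ∧ 0 < (cv x).2 := by
  obtain ⟨h0, h1, h2⟩ := hx
  constructor
  · apply Real.log_pos
    rw [lt_div_iff₀ (by linarith)]; linarith
  · apply Real.log_pos
    rw [lt_div_iff₀ (by linarith)]; linarith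

/-- The inverse change of variables in exponential coordinates. -/
lemma cv_inv {x : ℝ × ℝ} (hx : x ∈ Tri) :
    x.1 = (Real.exp (cv x).1 - 1) / (Real.exp (cv x).1 * Real.exp (cv x).2 - 1) := by
  obtain ⟨e1, e2⟩ := cv_exp hx
  obtain ⟨h0, h1, h2⟩ := hx
  rw [e1, e2]
  have a1 : 1 - x.2 ≠ 0 := by linarith
  have a2 : x.1 ≠ 0 := by linarith
  have a3 : (1 - x.1) / (1 - x.2) * (x.2 / x.1) - 1 = (x.2 - x.1) / ((1 - x.2) * x.1) := by
    field_simp; ring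
  have a4 : (1 - x.1) / (1 - x.2) - 1 = (x.2 - x.1) / (1 - x.2) := by
    field_simp; ring
  have a5 : x.2 - x.1 ≠ 0 := by linarith
  rw [a3, a4]
  field_simp

lemma cv_injOn : Set.InjOn cv Tri := by
  intro x hx y hy h
  have h1 : x.1 = y.1 := by rw [cv_inv hx, cv_inv hy, h]
  have h2 : x.2 = y.2 := by
    have ex := (cv_exp hx).2
    have ey := (cv_exp hy).2
    have px : x.1 ≠ 0 := hx.1.ne'
    rw [h, ey, h1] at ex
    have : y.1 ≠ 0 := hy.1.ne'
    field_simp at ex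
    exact ex.symm
  exact Prod.ext h1 h2

lemma cv_image : cv '' Tri = (Set.Ioi (0 : ℝ)) ×ˢ (Set.Ioi (0 : ℝ)) := by
  ext p
  constructor
  · rintro ⟨x, hx, rfl⟩
    exact cv_pos hx
  · rintro ⟨h1, h2⟩
    have h1 : 0 < p.1 := h1
    have h2 : 0 < p.2 := h2
    obtain ⟨U, hU⟩ : ∃ U, U = Real.exp p.1 := ⟨_, rfl⟩
    obtain ⟨V, hV⟩ : ∃ V, V = Real.exp p.2 := ⟨_, rfl⟩
    have hU1 : 1 < U := by rw [hU]; exact Real.one_lt_exp_iff.2 h1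
    have hV1 : 1 < V := by rw [hV]; exact Real.one_lt_exp_iff.2 h2
    have hUV : 0 < U * V - 1 := by nlinarith
    have hVU : V * U - 1 ≠ 0 := by rw [mul_comm]; exact hUV.ne'
    have hU0 : U - 1 ≠ 0 := by linarith
    have hV0 : V - 1 ≠ 0 := by linarith
    have q1 : 1 - (U - 1) / (U * V - 1) = U * (V - 1) / (U * V - 1) := by
      field_simp; ring
    have q2 : 1 - V * (U - 1) / (U * V - 1) = (V - 1) / (U * V - 1) := by
      field_simp; ring
    refine ⟨((U - 1) / (U * V - 1), V * (U - 1) / (U * V - 1)), ⟨?_, ?_, ?_⟩, ?_⟩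
    · exact div_pos (by linarith) hUV
    · apply div_lt_div_of_pos_right _ hUV
      nlinarith
    · show V * (U - 1) / (U * V - 1) < 1
      rw [div_lt_one hUV]; nlinarith
    · apply Prod.ext
      · simp only [cv]
        rw [q1, q2, show U * (V - 1) / (U * V - 1) / ((V - 1) / (U * V - 1)) = U by field_simp,
          hU, Real.log_exp]
      · simp only [cv]
        rw [show V * (U - 1) / (U * V - 1) / ((U - 1) / (U * V - 1)) = V by field_simp,
          hV, Real.log_exp]

/-- The one-factor integrand. -/
noncomputable def J (a b : ℕ) (x : ℝ × ℝ) : ℝ :=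
  Real.log ((1 - x.1) / (1 - x.2)) ^ a * Real.log (x.2 / x.1) ^ b * ((1 - x.1) * x.2)⁻¹

lemma J_integral (a b : ℕ) :
    ∫ x in Tri, J a b x = (a.factorial : ℝ) * b.factorial * mzv ![a + b + 2] := by
  have h := integral_image_eq_integral_abs_det_fderiv_smul (volume : Measure (ℝ × ℝ))
    measurableSet_Tri (fun x hx => cv_hasFDerivAt hx) cv_injOn
    (fun p : ℝ × ℝ => p.1 ^ a * p.2 ^ b * (Real.exp (p.1 + p.2) - 1)⁻¹)
  rw [cv_image, bose_integral] at h
  rw [h]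
  refine setIntegral_congr_fun measurableSet_Tri fun x hx => ?_
  obtain ⟨e1, e2⟩ := cv_exp hx
  simp only [smul_eq_mul]
  rw [Real.exp_add, e1, e2, cvd_det]
  obtain ⟨h0, h1, h2⟩ := hx
  have a1 : 0 < 1 - x.2 := by linarith
  have a0 : 0 < 1 - x.1 := by linarith
  have b2 : 0 < x.2 := by linarith
  have a3 : (1 - x.1) / (1 - x.2) * (x.2 / x.1) - 1 = (x.2 - x.1) / ((1 - x.2) * x.1) := by
    field_simp; ring
  have a4 : (1 - x.2)⁻¹ * (x.1)⁻¹ - (1 - x.1)⁻¹ * (x.2)⁻¹ =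
      (x.2 - x.1) / ((1 - x.2) * x.1 * ((1 - x.1) * x.2)) := by
    field_simp; ring
  have a5 : 0 < x.2 - x.1 := by linarith
  rw [a3, a4, abs_of_pos (by positivity)]
  simp only [J, cv]
  field_simp

lemma J_integrable (a b : ℕ) : IntegrableOn (J a b) Tri := by
  refine Integrable.of_integral_ne_zero ?_
  rw [J_integral]
  have := mzv_pos (a + b)
  positivity

lemma binom_div (n : ℕ) (x y : ℝ) :
    (x + y) ^ n = (n.factorial : ℝ) * ∑ a ∈ antidiagonal n,
      x ^ a.1 * y ^ a.2 * ((a.1.factorial : ℝ) * a.2.factorial)⁻¹ := by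
  rw [(Commute.all x y).add_pow', Finset.mul_sum]
  refine Finset.sum_congr rfl fun a ha => ?_
  rw [HasAntidiagonal.mem_antidiagonal] at ha
  subst ha
  have h := Nat.add_choose_mul_factorial_mul_factorial a.1 a.2
  rw [← Nat.choose_symm_add] at h
  have h' : ((a.1 + a.2).choose a.1 : ℝ) * a.1.factorial * a.2.factorial =
    (a.1 + a.2).factorial := by exact_mod_cast h
  rw [nsmul_eq_mul, ← h']
  field_simp

theorem first_evaluation_two_variable_integral (k ℓ : ℕ) (μ₁ μ₂ ξ₁ ξ₂ : ℝ) :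
    ((k.factorial : ℝ) * ℓ.factorial)⁻¹ *
      ∫ x in {x : (ℝ × ℝ) × ℝ × ℝ |
          (0 < x.1.1 ∧ x.1.1 < x.1.2 ∧ x.1.2 < 1) ∧
          (0 < x.2.1 ∧ x.2.1 < x.2.2 ∧ x.2.2 < 1)},
        (μ₁ * Real.log ((1 - x.1.1) / (1 - x.1.2)) +
          μ₂ * Real.log ((1 - x.2.1) / (1 - x.2.2))) ^ k *
        (ξ₁ * Real.log (x.1.2 / x.1.1) + ξ₂ * Real.log (x.2.2 / x.2.1)) ^ ℓ *
        ((1 - x.1.1) * x.1.2 * (1 - x.2.1) * x.2.2)⁻¹ =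
    ∑ a ∈ antidiagonal k, ∑ b ∈ antidiagonal ℓ,
      μ₁ ^ a.1 * μ₂ ^ a.2 * ξ₁ ^ b.1 * ξ₂ ^ b.2 *
        (mzv ![a.1 + b.1 + 2] * mzv ![a.2 + b.2 + 2]) := by
  have hset : {x : (ℝ × ℝ) × ℝ × ℝ |
          (0 < x.1.1 ∧ x.1.1 < x.1.2 ∧ x.1.2 < 1) ∧
          (0 < x.2.1 ∧ x.2.1 < x.2.2 ∧ x.2.2 < 1)} = Tri ×ˢ Tri := rfl
  rw [hset]
  have hfun : ∀ x : (ℝ × ℝ) × ℝ × ℝ,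
      (μ₁ * Real.log ((1 - x.1.1) / (1 - x.1.2)) +
          μ₂ * Real.log ((1 - x.2.1) / (1 - x.2.2))) ^ k *
        (ξ₁ * Real.log (x.1.2 / x.1.1) + ξ₂ * Real.log (x.2.2 / x.2.1)) ^ ℓ *
        ((1 - x.1.1) * x.1.2 * (1 - x.2.1) * x.2.2)⁻¹ =
      ((k.factorial : ℝ) * ℓ.factorial) * ∑ a ∈ antidiagonal k, ∑ b ∈ antidiagonal ℓ,
        (μ₁ ^ a.1 * μ₂ ^ a.2 * ξ₁ ^ b.1 * ξ₂ ^ b.2 *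
          ((a.1.factorial : ℝ) * a.2.factorial)⁻¹ * ((b.1.factorial : ℝ) * b.2.factorial)⁻¹) *
          (J a.1 b.1 x.1 * J a.2 b.2 x.2) := by
    intro x
    rw [binom_div k, binom_div ℓ, mul_mul_mul_comm, Finset.sum_mul_sum, mul_assoc, Finset.sum_mul]
    congr 1
    refine Finset.sum_congr rfl fun a _ => ?_
    rw [Finset.sum_mul]
    refine Finset.sum_congr rfl fun b _ => ?_
    simp only [J, mul_pow, mul_inv]
    ring
  have hprod : ∀ a b c d : ℕ, IntegrableOn
      (fun x : (ℝ × ℝ) × ℝ × ℝ => J a b x.1 * J c d x.2) (Tri ×ˢ Tri) := by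
    intro a b c d
    rw [IntegrableOn, Measure.volume_eq_prod, ← Measure.prod_restrict]
    exact Integrable.mul_prod (J_integrable a b) (J_integrable c d)
  have hval : ∀ a b c d : ℕ,
      ∫ x in Tri ×ˢ Tri, J a b x.1 * J c d x.2 =
      ((a.factorial : ℝ) * b.factorial * mzv ![a + b + 2]) *
        ((c.factorial : ℝ) * d.factorial * mzv ![c + d + 2]) := by
    intro a b c d
    rw [Measure.volume_eq_prod, setIntegral_prod_mul, J_integral, J_integral]
  simp_rw [hfun]
  rw [integral_const_mul, ← mul_assoc, inv_mul_cancel₀ (by positivity), one_mul,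
    integral_finsetSum _ (fun a _ => integrable_finsetSum _
      (fun b _ => (hprod a.1 b.1 a.2 b.2).const_mul _))]
  refine Finset.sum_congr rfl fun a _ => ?_
  rw [integral_finsetSum _ (fun b _ => (hprod a.1 b.1 a.2 b.2).const_mul _)]
  refine Finset.sum_congr rfl fun b _ => ?_
  rw [integral_const_mul, hval]
  field_simp
end
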